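/- Let θ ∈ (0, 1/2] be such that θ⁻¹ ≥ 2 is an integer, let n ≥ 2 be an integer, and let U : S_{T[θ,S_n]} → S_{T[θ,S_n]} be a surjective isometry of the unit sphere of T[θ, S_n]. Then there exists a sequence (ε_i)_{i=1}^∞ with values in {−1, 1} such that U(e_i) = ε_i e_i for every positive integer i. -/

import Mathlib

open scoped BigOperators

noncomputable section

/-- Projection of a finitely supported vector onto the coordinates in `E`. -/
def tsProj (E : Finset ℕ+) (x : ℕ+ →₀ ℝ) : ℕ+ →₀ ℝ :=
  x.filter fun i => i ∈ E

/-- The Schreier families `S_n` on the positive integers: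
`S₁` consists of the sets `F` with `|F| ≤ min F` (together with `∅`), and `S_{n+1}`
consists of unions `F₁ ∪ ⋯ ∪ F_d` of nonempty members `F₁ < ⋯ < F_d` of `S_n`
with `d ≤ min F₁` (together with `∅`). -/
def Schreier : ℕ → Set (Finset ℕ+)
  | 0 => {F | F.card ≤ 1}
  | 1 => {F | ∀ a ∈ F, F.card ≤ (a : ℕ)}
  | n + 2 =>
      {F | F = ∅ ∨
        ∃ (d : ℕ) (G : Fin d → Finset ℕ+),
          0 < d ∧ (∀ i, G i ∈ Schreier (n + 1)) ∧ (∀ i, (G i).Nonempty) ∧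
          (∀ i j : Fin d, i < j → ∀ a ∈ G i, ∀ b ∈ G j, a < b) ∧
          (∀ i, ∀ a ∈ G i, d ≤ (a : ℕ)) ∧ F = Finset.univ.biUnion G}

/-- A tuple of nonempty finite sets `E 0 < E 1 < ⋯` whose set of minima belongs to `S`. -/
def TsAdmissible (S : Set (Finset ℕ+)) {d : ℕ} (E : Fin d → Finset ℕ+) : Prop :=
  (∀ i, (E i).Nonempty) ∧
  (∀ i j : Fin d, i < j → ∀ a ∈ E i, ∀ b ∈ E j, a < b) ∧
  ∃ μ : Fin d → ℕ+, (∀ i, IsLeast (↑(E i) : Set ℕ+) (μ i)) ∧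
    Finset.univ.image μ ∈ S

/-- The iterated norms `‖·‖_m` in the construction of the Tsirelson norm:
`‖x‖₀` is the supremum norm and
`‖x‖_{m+1} = max(‖x‖_m, sup{θ ∑ᵢ ‖Eᵢ x‖_m : E₁ < ⋯ < E_d, {min Eᵢ} ∈ S})`. -/
def tnormAux (θ : ℝ) (S : Set (Finset ℕ+)) : ℕ → (ℕ+ →₀ ℝ) → ℝ
  | 0, x => ⨆ i, |x i|
  | m + 1, x =>
      max (tnormAux θ S m x)
        (sSup {r : ℝ | ∃ (d : ℕ) (E : Fin d → Finset ℕ+), TsAdmissible S E ∧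
          r = θ * ∑ i, tnormAux θ S m (tsProj (E i) x)})

/-- The Tsirelson norm `‖x‖_{θ,S} = sup_m ‖x‖_m` on `c₀₀`. -/
def tnorm (θ : ℝ) (S : Set (Finset ℕ+)) (x : ℕ+ →₀ ℝ) : ℝ :=
  ⨆ m : ℕ, tnormAux θ S m x

/-- `X`, together with the sequence `e` of unit vectors, is (a realization of) the
Tsirelson space `T[θ, S_n]`: a Banach space containing `c₀₀` isometrically
(w.r.t. the Tsirelson norm) as a dense subspace, in which `(e i)` is a
(1-unconditional) basis, i.e. every `x` has a unique expansion `x = ∑ᵢ aᵢ eᵢ`. -/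
structure IsTsirelsonSpace (θ : ℝ) (n : ℕ) (X : Type*) [NormedAddCommGroup X]
    [NormedSpace ℝ X] (e : ℕ+ → X) : Prop where
  complete : CompleteSpace X
  norm_embed : ∀ a : ℕ+ →₀ ℝ, ‖a.sum fun i c => c • e i‖ = tnorm θ (Schreier n) a
  dense_embed : DenseRange fun a : ℕ+ →₀ ℝ => a.sum fun i c => c • e i
  expansion : ∀ x : X, ∃! a : ℕ+ → ℝ, HasSum (fun i => a i • e i) x

/-!
Write `k = θ⁻¹` and let `b` be the unit vector basis.

An admissible family whose first set contains `1` consists of one set, so `‖x‖` is the maximum of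
the modulus of its first coordinate and the norm of the rest. Hence the unit balls around `±b 1`
cover the sphere, and so do those around the images `U (±b 1)`. On the other hand, a sum of `k`
unit vectors has norm `1`, and if it is supported far to the right then its distance to any vector
outside the span of `b 1` exceeds `1`. This forces `U (±b 1) = ±c • b 1`.

For `i ≠ 1`, distances to `U (±b 1)` show that `U (±b i)` has vanishing first coordinate. Let `p`
be the first nonzero coordinate of `x = U (b i)`. If a vector `v` of the sphere is at distance more
than `1 + θ` from `b i`, its distance to `-b i` is less than `1 + θ - θ²`. Let `v` be the preimage
of a far block. The distances of this block to `U (-b i)` and to `x` are asymptotically at least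
`1 + θ` and `1 + θ (|x p| + ‖x - x p • b p‖)`. This leaves only `|x p| + ‖x - x p • b p‖ ≤ 1`,
whence `x = ±b p`. So `U` induces an injection `π` of the positive integers which fixes `1`.

Transporting the distances of `b 1 + t • ∑ a ∈ G, b a` to all `±b j` gives
`‖∑ a ∈ π '' G, b a‖ ≤ ‖∑ a ∈ G, b a‖` whenever `1 ∉ G`. If `m < π m` for some `m`, there is a set
`G ∌ 1` with more than `k` elements that does not belong to `S_n` although `π '' G` does; then the
left side is at least `θ |G| > 1` and the right side at most `max 1 (θ (|G| - 1))`. Hence `π i ≤ i`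
for all `i`, and injectivity gives `π = id`.
-/

/-! ### Schreier families -/

/-- A colouring witnessing that `F` is a union of at most `d ≤ min F` successive members of `S`:
the points of colour `i` form the `i`-th member. -/
structure IsBlockColoring (S : Set (Finset ℕ+)) (F : Finset ℕ+) (d : ℕ) (c : ℕ+ → ℕ) : Prop where
  lt : ∀ a ∈ F, c a < d
  monotoneOn : MonotoneOn c F
  fiber_mem : ∀ i, {a ∈ F | c a = i} ∈ S
  le : ∀ a ∈ F, d ≤ a

/-- `σ` exhibits `G` as a spread of a subset of `F`: it moves the points of `G` back to the left
into `F`, keeping their order. -/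
structure SpreadsInto (σ : ℕ+ → ℕ+) (G F : Finset ℕ+) : Prop where
  mem : ∀ a ∈ G, σ a ∈ F
  le : ∀ a ∈ G, σ a ≤ a
  strictMonoOn : StrictMonoOn σ G

/-- Families of finite sets that are both hereditary and spreading. -/
def IsHereditarySpreading (S : Set (Finset ℕ+)) : Prop :=
  ∀ ⦃σ : ℕ+ → ℕ+⦄ ⦃G F : Finset ℕ+⦄, SpreadsInto σ G F → F ∈ S → G ∈ S

lemma spreadsInto_id_of_subset {G F : Finset ℕ+} (h : G ⊆ F) : SpreadsInto id G F :=
  ⟨h, fun _ _ => le_rfl, strictMonoOn_id⟩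

lemma IsHereditarySpreading.mono {S : Set (Finset ℕ+)} (hS : IsHereditarySpreading S)
    {G F : Finset ℕ+} (h : G ⊆ F) (hF : F ∈ S) : G ∈ S :=
  hS (spreadsInto_id_of_subset h) hF

lemma isHereditarySpreading_schreier_zero : IsHereditarySpreading (Schreier 0) :=
  fun _ _ _ hσ hF =>
    (Finset.card_le_card_of_injOn _ hσ.mem hσ.strictMonoOn.injOn).trans hF

namespace IsBlockColoring

variable {S : Set (Finset ℕ+)} {F G : Finset ℕ+} {d : ℕ} {c : ℕ+ → ℕ}

lemma comp (h : IsBlockColoring S F d c) (hS : IsHereditarySpreading S) {σ : ℕ+ → ℕ+}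
    (hσ : SpreadsInto σ G F) : IsBlockColoring S G d (c ∘ σ) where
  lt a ha := h.lt _ (hσ.mem a ha)
  monotoneOn a ha b hb hab := h.monotoneOn (hσ.mem a ha) (hσ.mem b hb)
    (hσ.strictMonoOn.monotoneOn ha hb hab)
  fiber_mem i := by
    refine hS (σ := σ) ⟨fun a ha => ?_, fun a ha => hσ.le a (Finset.mem_filter.1 ha).1,
      hσ.strictMonoOn.mono (Finset.coe_subset.2 (Finset.filter_subset _ _))⟩ (h.fiber_mem i)
    have ⟨haG, hai⟩ := Finset.mem_filter.1 ha
    exact Finset.mem_filter.2 ⟨hσ.mem a haG, hai⟩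
  le a ha := (h.le _ (hσ.mem a ha)).trans (hσ.le a ha)

lemma empty (hS : ∅ ∈ S) : IsBlockColoring S ∅ 0 0 where
  lt := by simp
  monotoneOn := monotoneOn_const
  fiber_mem := by simpa using hS
  le := by simp

lemma strictMonoOn_card_filter_lt (F : Finset ℕ+) :
    StrictMonoOn (fun a => {b ∈ F | b < a}.card) F := by
  refine fun a ha b _ hab => Finset.card_lt_card ⟨?_, fun hsub => ?_⟩
  · exact Finset.monotone_filter_right F fun x _ (hx : x < a) => hx.trans hab
  · exact lt_irrefl a (Finset.mem_filter.1 (hsub (Finset.mem_filter.2 ⟨ha, hab⟩))).2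

lemma of_forall_card_le (hF : ∀ a ∈ F, F.card ≤ (a : ℕ)) :
    IsBlockColoring (Schreier 0) F F.card fun a => {b ∈ F | b < a}.card where
  lt a ha := Finset.card_lt_card (Finset.filter_ssubset.2 ⟨a, ha, lt_irrefl a⟩)
  monotoneOn := (strictMonoOn_card_filter_lt F).monotoneOn
  fiber_mem i := Finset.card_le_one.2 fun a ha b hb => by
    obtain ⟨haF, hai⟩ := Finset.mem_filter.1 ha
    obtain ⟨hbF, hbi⟩ := Finset.mem_filter.1 hb
    exact (strictMonoOn_card_filter_lt F).injOn haF hbF (hai.trans hbi.symm)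
  le := hF

lemma card_le (h : IsBlockColoring (Schreier 0) F d c) : F.card ≤ d := by
  refine (Finset.card_le_card_of_injOn c (t := Finset.range d)
    (fun a ha => Finset.mem_coe.2 (Finset.mem_range.2 (h.lt a ha))) ?_).trans_eq
    (Finset.card_range d)
  intro a ha b hb hab
  exact Finset.card_le_one.1 (h.fiber_mem (c b)) a (Finset.mem_filter.2 ⟨ha, hab⟩) b
    (Finset.mem_filter.2 ⟨hb, rfl⟩)

lemma biUnion {G : Fin d → Finset ℕ+} (hS : ∅ ∈ S) (hG : ∀ i, G i ∈ S)
    (hlt : ∀ i j : Fin d, i < j → ∀ a ∈ G i, ∀ b ∈ G j, a < b) (hle : ∀ i, ∀ a ∈ G i, d ≤ (a : ℕ)) :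
    ∃ c, IsBlockColoring S (Finset.univ.biUnion G) d c := by
  have hmem : ∀ a ∈ Finset.univ.biUnion G, ∃ i : ℕ, ∃ h : i < d, a ∈ G ⟨i, h⟩ := by
    intro a ha
    obtain ⟨i, -, hi⟩ := Finset.mem_biUnion.1 ha
    exact ⟨i, i.2, hi⟩
  choose! c hcd hcG using hmem
  refine ⟨c, hcd, fun a ha b hb hab => ?_, fun i => ?_, fun a ha => hle _ a (hcG a ha)⟩
  · by_contra! hba
    exact (hlt _ _ hba b (hcG b hb) a (hcG a ha)).not_ge hab
  · by_cases hi : i < d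
    · convert hG ⟨i, hi⟩ using 1
      ext a
      refine ⟨fun ha => ?_, fun ha => ?_⟩
      · obtain ⟨haF, rfl⟩ := Finset.mem_filter.1 ha
        exact hcG a haF
      · have haF := Finset.mem_biUnion.2 ⟨_, Finset.mem_univ _, ha⟩
        refine Finset.mem_filter.2 ⟨haF, ?_⟩
        rcases lt_trichotomy (c a) i with h | h | h
        · exact absurd (hlt ⟨c a, hcd a haF⟩ ⟨i, hi⟩ h a (hcG a haF) a ha) (lt_irrefl a)
        · exact h
        · exact absurd (hlt ⟨i, hi⟩ ⟨c a, hcd a haF⟩ h a ha a (hcG a haF)) (lt_irrefl a)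
    · rwa [Finset.filter_false_of_mem fun a ha (h : c a = i) => hi (h ▸ hcd a ha)]

lemma exists_biUnion (h : IsBlockColoring S F d c) (hF : F.Nonempty) :
    ∃ (d' : ℕ) (G : Fin d' → Finset ℕ+), 0 < d' ∧ (∀ i, G i ∈ S) ∧ (∀ i, (G i).Nonempty) ∧
      (∀ i j : Fin d', i < j → ∀ a ∈ G i, ∀ b ∈ G j, a < b) ∧
      (∀ i, ∀ a ∈ G i, d' ≤ (a : ℕ)) ∧ F = Finset.univ.biUnion G := by
  set I := F.image c
  let ν := I.orderEmbOfFin rfl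
  have hcard : I.card ≤ d := by
    refine (Finset.card_le_card fun i hi => ?_).trans_eq (Finset.card_range d)
    obtain ⟨a, ha, rfl⟩ := Finset.mem_image.1 hi
    exact Finset.mem_range.2 (h.lt a ha)
  refine ⟨I.card, fun j => {a ∈ F | c a = ν j}, (hF.image c).card_pos, fun j => h.fiber_mem _,
    fun j => ?_, fun i j hij a ha b hb => ?_, fun j a ha => ?_, ?_⟩
  · obtain ⟨a, ha, haj⟩ := Finset.mem_image.1 (I.orderEmbOfFin_mem rfl j)
    exact ⟨a, Finset.mem_filter.2 ⟨ha, haj⟩⟩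
  · obtain ⟨haF, hai⟩ := Finset.mem_filter.1 ha
    obtain ⟨hbF, hbj⟩ := Finset.mem_filter.1 hb
    by_contra! hba
    exact (hai ▸ hbj ▸ h.monotoneOn hbF haF hba).not_gt (ν.strictMono hij)
  · exact hcard.trans (h.le a (Finset.mem_filter.1 ha).1)
  · ext a
    refine ⟨fun ha => ?_, fun ha => ?_⟩
    · obtain ⟨j, hj⟩ : c a ∈ Set.range ν := by
        rw [Finset.range_orderEmbOfFin]
        exact Finset.mem_image_of_mem c ha
      exact Finset.mem_biUnion.2 ⟨j, Finset.mem_univ j, Finset.mem_filter.2 ⟨ha, hj.symm⟩⟩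
    · obtain ⟨j, -, hj⟩ := Finset.mem_biUnion.1 ha
      exact (Finset.mem_filter.1 hj).1

lemma insert_max (h : IsBlockColoring S G d c) (hS : IsHereditarySpreading S) {b : ℕ+}
    (hb : {b} ∈ S) (hGb : ∀ i ∈ G, i < b) (hd : ∀ i ∈ insert b G, d + 1 ≤ i) :
    IsBlockColoring S (insert b G) (d + 1) (Function.update c b d) := by
  have hold : ∀ i ∈ G, Function.update c b d i = c i := fun i hi =>
    Function.update_of_ne (hGb i hi).ne _ _
  have hnew : Function.update c b d b = d := Function.update_self ..
  have hcd : ∀ i ∈ insert b G, Function.update c b d i ≤ d := by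
    simpa [hnew] using fun i hi => (hold i hi).trans_le (h.lt i hi).le
  refine ⟨fun i hi => Nat.lt_succ_of_le (hcd i hi), fun i hi j hj hij => ?_, fun t => ?_, hd⟩
  · rcases Finset.mem_insert.1 hj with rfl | hjG
    · exact (hcd i hi).trans_eq hnew.symm
    · have hiG : i ∈ G := (Finset.mem_insert.1 hi).resolve_left fun hib =>
        (hGb j hjG).not_ge (hib ▸ hij)
      rw [hold i hiG, hold j hjG]
      exact h.monotoneOn hiG hjG hij
  · rcases eq_or_ne t d with rfl | ht
    · refine hS.mono (fun i hi => ?_) hb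
      obtain ⟨hi, hit⟩ := Finset.mem_filter.1 hi
      refine Finset.mem_singleton.2 ((Finset.mem_insert.1 hi).resolve_right fun hiG => ?_)
      exact (h.lt i hiG).ne ((hold i hiG).symm.trans hit)
    · refine hS.mono (fun i hi => ?_) (h.fiber_mem t)
      obtain ⟨hi, hit⟩ := Finset.mem_filter.1 hi
      rcases Finset.mem_insert.1 hi with rfl | hiG
      · exact absurd (hit.symm.trans hnew) ht
      · exact Finset.mem_filter.2 ⟨hiG, (hold i hiG).symm.trans hit⟩

end IsBlockColoring

lemma empty_mem_schreier : ∀ n, ∅ ∈ Schreier n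
  | 0 | 1 => by simp [Schreier]
  | _ + 2 => Or.inl rfl

lemma mem_schreier_succ_iff {n : ℕ} {F : Finset ℕ+} :
    F ∈ Schreier (n + 1) ↔ ∃ d c, IsBlockColoring (Schreier n) F d c := by
  cases n with
  | zero =>
    refine ⟨fun hF => ⟨_, _, .of_forall_card_le hF⟩, ?_⟩
    rintro ⟨d, c, h⟩ a ha
    exact h.card_le.trans (h.le a ha)
  | succ n =>
    constructor
    · rintro (rfl | ⟨d, G, -, hG, -, hlt, hle, rfl⟩)
      · exact ⟨0, 0, .empty (empty_mem_schreier _)⟩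
      · exact ⟨d, IsBlockColoring.biUnion (empty_mem_schreier _) hG hlt hle⟩
    · rintro ⟨d, c, h⟩
      exact F.eq_empty_or_nonempty.imp id fun hF => h.exists_biUnion hF

lemma isHereditarySpreading_schreier : ∀ n, IsHereditarySpreading (Schreier n)
  | 0 => isHereditarySpreading_schreier_zero
  | n + 1 => fun σ G F hσ hF => by
    obtain ⟨d, c, h⟩ := mem_schreier_succ_iff.1 hF
    exact mem_schreier_succ_iff.2 ⟨d, c ∘ σ, h.comp (isHereditarySpreading_schreier n) hσ⟩

lemma schreier_subset_schreier_succ (n : ℕ) : Schreier n ⊆ Schreier (n + 1) := fun _ hF =>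
  mem_schreier_succ_iff.2 ⟨1, 0, fun _ _ => one_pos, monotoneOn_const,
    fun _ => (isHereditarySpreading_schreier n).mono (Finset.filter_subset _ _) hF,
    fun a _ => a.pos⟩

lemma monotone_schreier : Monotone Schreier :=
  monotone_nat_of_le_succ schreier_subset_schreier_succ

lemma singleton_mem_schreier (n : ℕ) (a : ℕ+) : {a} ∈ Schreier n :=
  monotone_schreier n.zero_le (by simp [Schreier])

lemma card_le_one_of_one_mem_schreier {n : ℕ} {F : Finset ℕ+} (hF : F ∈ Schreier n)
    (h1 : 1 ∈ F) : F.card ≤ 1 := by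
  induction n generalizing F with
  | zero => exact hF
  | succ n ih =>
    obtain ⟨d, c, h⟩ := mem_schreier_succ_iff.1 hF
    have hd : d ≤ 1 := by exact_mod_cast h.le 1 h1
    have hfilter : {a ∈ F | c a = 0} = F :=
      Finset.filter_true_of_mem fun a ha => Nat.lt_one_iff.1 ((h.lt a ha).trans_le hd)
    exact ih (hfilter ▸ h.fiber_mem 0) h1

lemma union_mem_schreier_succ {n : ℕ} {A B : Finset ℕ+} (hA : A ∈ Schreier n)
    (hB : B ∈ Schreier n) (hAB : ∀ a ∈ A, ∀ b ∈ B, a < b) (h2 : ∀ a ∈ A ∪ B, 2 ≤ a) :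
    A ∪ B ∈ Schreier (n + 1) := by
  have hS := isHereditarySpreading_schreier n
  refine mem_schreier_succ_iff.2 ⟨2, fun a => if a ∈ A then 0 else 1, fun a _ => ?_,
    fun a ha b _ hab => ?_, fun i => ?_, fun a ha => by exact_mod_cast h2 a ha⟩
  · split_ifs <;> norm_num
  · split_ifs with haA hbA hbA <;> try norm_num
    exact (hAB b hbA a ((Finset.mem_union.1 ha).resolve_left haA)).not_ge hab
  · rcases eq_or_ne i 0 with rfl | hi
    · exact hS.mono (fun a ha => by simp_all) hA
    · refine hS.mono (fun a ha => ?_) hB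
      simp only [Finset.mem_filter, Finset.mem_union] at ha
      grind

/-- The number of blocks of `F` is at most `a`, and everything in `insert b G` lies beyond `a`, so
there is room for an extra block. -/
lemma insert_mem_schreier_succ {n : ℕ} {σ : ℕ+ → ℕ+} {F G : Finset ℕ+} {a b : ℕ+}
    (hF : F ∈ Schreier (n + 1)) (hσ : SpreadsInto σ G F) (ha : a ∈ F) (haG : ∀ i ∈ G, a < i)
    (hab : a < b) (hGb : ∀ i ∈ G, i < b) : insert b G ∈ Schreier (n + 1) := by
  obtain ⟨d, c, h⟩ := mem_schreier_succ_iff.1 hF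
  have hS := isHereditarySpreading_schreier n
  refine mem_schreier_succ_iff.2
    ⟨_, _, (h.comp hS hσ).insert_max hS (singleton_mem_schreier n b) hGb fun i hi => ?_⟩
  have hai : a < i := (Finset.mem_insert.1 hi).elim (fun h => h ▸ hab) (haG i)
  exact (Nat.succ_le_succ (h.le a ha)).trans ((PNat.coe_lt_coe _ _).2 hai)

lemma exists_finset_forall_coloring_exists_le {S : Set (Finset ℕ+)} (hS : IsHereditarySpreading S)
    {A : Set ℕ+} (hA : ∀ N, ∃ F : Finset ℕ+, ↑F ⊆ A ∩ Set.Ioi N ∧ F ∉ S) (j : ℕ) :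
    ∃ F : Finset ℕ+, ↑F ⊆ A ∧ ∀ c : ℕ+ → ℕ, MonotoneOn c F → (∀ i, {a ∈ F | c a = i} ∈ S) →
      ∃ a ∈ F, j ≤ c a := by
  induction j with
  | zero =>
    obtain ⟨F, hFA, hF⟩ := hA 1
    refine ⟨F, fun a ha => (hFA ha).1, fun c _ hc => ?_⟩
    obtain ⟨a, ha⟩ : F.Nonempty := Finset.nonempty_iff_ne_empty.2 fun hF0 =>
      hF (hS.mono (by simp [hF0]) (hc 0))
    exact ⟨a, ha, Nat.zero_le _⟩
  | succ j ih =>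
    obtain ⟨F, hFA, hF⟩ := ih
    obtain ⟨H, hHA, hH⟩ := hA (F.sup id)
    have hFH : ∀ a ∈ F, ∀ b ∈ H, a < b := fun a ha b hb =>
      (Finset.le_sup (f := id) ha).trans_lt (hHA hb).2
    refine ⟨F ∪ H, ?_, fun c hc hcS => ?_⟩
    · rw [Finset.coe_union]
      exact Set.union_subset hFA fun b hb => (hHA hb).1
    · obtain ⟨a, ha, haj⟩ := hF c (hc.mono (by simp)) fun i => hS.mono
        (Finset.filter_subset_filter _ Finset.subset_union_left) (hcS i)
      by_contra! hlt
      refine hH (hS.mono (fun b hb => ?_) (hcS j))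
      have hbFH := Finset.mem_union_right F hb
      refine Finset.mem_filter.2 ⟨hbFH, le_antisymm (Nat.lt_succ_iff.1 (hlt b hbFH)) ?_⟩
      exact haj.trans (hc (by simp [ha]) (by simp [hb]) (hFH a ha b hb).le)

lemma exists_finset_notMem_schreier (n : ℕ) {A : Set ℕ+} (hA : A.Infinite) :
    ∃ F : Finset ℕ+, ↑F ⊆ A ∧ F ∉ Schreier n := by
  induction n generalizing A with
  | zero =>
    obtain ⟨F, hFA, hF⟩ := hA.exists_subset_card_eq 2
    exact ⟨F, hFA, by simp [Schreier, hF]⟩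
  | succ n ih =>
    have htail : ∀ N, (A ∩ Set.Ioi N).Infinite := fun N => by
      rw [← Set.compl_Iic]
      exact hA.sdiff (Set.finite_Iic N)
    obtain ⟨a₀, ha₀⟩ := hA.nonempty
    have hS := isHereditarySpreading_schreier n
    obtain ⟨F, hFA, hF⟩ := exists_finset_forall_coloring_exists_le hS (fun N => ih (htail N)) a₀
    refine ⟨insert a₀ F, by simpa [Set.insert_subset_iff] using ⟨ha₀, hFA⟩, fun hmem => ?_⟩
    obtain ⟨d, c, h⟩ := mem_schreier_succ_iff.1 hmem
    obtain ⟨a, ha, hac⟩ := hF c (h.monotoneOn.mono (by simp)) fun i => hS.mono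
      (Finset.filter_subset_filter _ (Finset.subset_insert _ _)) (h.fiber_mem i)
    have hlt := h.lt a (Finset.mem_insert_of_mem ha)
    exact (hlt.trans_le (h.le a₀ (Finset.mem_insert_self _ _))).not_ge hac

/-! ### The norm of `c₀₀` -/

/-- The `ℓ₁` norm on `c₀₀`. -/
def l1Norm (x : ℕ+ →₀ ℝ) : ℝ := ∑ i ∈ x.support, |x i|

/-- The vector `∑_{i ∈ A} e_i` of `c₀₀`. -/
def indVec (A : Finset ℕ+) : ℕ+ →₀ ℝ := Finsupp.indicator A fun _ _ => 1

lemma indVec_apply (A : Finset ℕ+) (i : ℕ+) : indVec A i = if i ∈ A then 1 else 0 := by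
  simp [indVec, Finsupp.indicator_apply]

lemma tsProj_apply (E : Finset ℕ+) (x : ℕ+ →₀ ℝ) (i : ℕ+) :
    tsProj E x i = if i ∈ E then x i else 0 :=
  Finsupp.filter_apply _ _ _

lemma tsProj_add (E : Finset ℕ+) (x y : ℕ+ →₀ ℝ) : tsProj E (x + y) = tsProj E x + tsProj E y :=
  Finsupp.filter_add

lemma tsProj_indVec (E A : Finset ℕ+) : tsProj E (indVec A) = indVec (A ∩ E) := by
  ext i
  simp only [tsProj_apply, indVec_apply, Finset.mem_inter]
  grind

lemma l1Norm_single (i : ℕ+) (t : ℝ) : l1Norm (Finsupp.single i t) = |t| :=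
  Finsupp.sum_single_index (h := fun _ c => |c|) abs_zero

lemma l1Norm_indVec (A : Finset ℕ+) : l1Norm (indVec A) = A.card := by
  have hsupp : (indVec A).support = A := by ext; simp [indVec_apply]
  rw [l1Norm, hsupp, Finset.sum_congr rfl fun i hi => by rw [indVec_apply, if_pos hi, abs_one]]
  simp

lemma abs_apply_le_l1Norm (x : ℕ+ →₀ ℝ) (i : ℕ+) : |x i| ≤ l1Norm x := by
  by_cases h : i ∈ x.support
  · exact Finset.single_le_sum (f := fun i => |x i|) (fun _ _ => abs_nonneg _) h
  · rw [Finsupp.notMem_support_iff.1 h, abs_zero]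
    exact Finset.sum_nonneg fun _ _ => abs_nonneg _

lemma l1Norm_nonneg (x : ℕ+ →₀ ℝ) : 0 ≤ l1Norm x := (abs_nonneg _).trans (abs_apply_le_l1Norm x 1)

section Norm

variable {θ : ℝ} {S : Set (Finset ℕ+)} {d : ℕ} {E : Fin d → Finset ℕ+}

namespace TsAdmissible

lemma eq_of_mem (hE : TsAdmissible S E) {i j : Fin d} {a : ℕ+} (hi : a ∈ E i) (hj : a ∈ E j) :
    i = j := by
  rcases lt_trichotomy i j with h | h | h
  · exact absurd (hE.2.1 i j h a hi a hj) (lt_irrefl a)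
  · exact h
  · exact absurd (hE.2.1 j i h a hj a hi) (lt_irrefl a)

lemma pairwiseDisjoint (hE : TsAdmissible S E) (s : Set (Fin d)) : s.PairwiseDisjoint E :=
  fun _ _ _ _ hij => Finset.disjoint_left.2 fun _ hi hj => hij (hE.eq_of_mem hi hj)

lemma sum_l1Norm_tsProj_le (hE : TsAdmissible S E) (x : ℕ+ →₀ ℝ) :
    ∑ j, l1Norm (tsProj (E j) x) ≤ l1Norm x := by
  calc ∑ j, l1Norm (tsProj (E j) x) = ∑ j, ∑ i ∈ x.support ∩ E j, |x i| := by
        refine Finset.sum_congr rfl fun j _ => ?_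
        rw [l1Norm, tsProj, Finsupp.support_filter, Finset.filter_mem_eq_inter]
        refine Finset.sum_congr rfl fun i hi => ?_
        rw [Finsupp.filter_apply_pos _ _ (Finset.mem_inter.1 hi).2]
    _ = ∑ i ∈ Finset.univ.biUnion fun j => x.support ∩ E j, |x i| :=
        (Finset.sum_biUnion ((hE.pairwiseDisjoint _).mono fun _ => Finset.inter_subset_right)).symm
    _ ≤ l1Norm x := Finset.sum_le_sum_of_subset_of_nonneg
        (Finset.biUnion_subset.2 fun _ _ => Finset.inter_subset_left) fun _ _ _ => abs_nonneg _

lemma sum_card_inter_le (hE : TsAdmissible S E) (A : Finset ℕ+) :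
    ∑ j, ((A ∩ E j).card : ℝ) ≤ A.card := by
  simpa only [tsProj_indVec, l1Norm_indVec] using hE.sum_l1Norm_tsProj_le (indVec A)

end TsAdmissible

lemma tnormAux_nonneg (θ : ℝ) (S : Set (Finset ℕ+)) (m : ℕ) (x : ℕ+ →₀ ℝ) :
    0 ≤ tnormAux θ S m x := by
  induction m with
  | zero => exact Real.iSup_nonneg fun _ => abs_nonneg _
  | succ m ih => exact ih.trans (le_max_left _ _)

lemma TsAdmissible.mul_sum_le_l1Norm (hE : TsAdmissible S E) (h1 : θ ≤ 1) {f : (ℕ+ →₀ ℝ) → ℝ}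
    (hf0 : ∀ y, 0 ≤ f y) (hf : ∀ y, f y ≤ l1Norm y) (x : ℕ+ →₀ ℝ) :
    θ * ∑ j, f (tsProj (E j) x) ≤ l1Norm x :=
  calc θ * ∑ j, f (tsProj (E j) x) ≤ ∑ j, f (tsProj (E j) x) :=
        mul_le_of_le_one_left (Finset.sum_nonneg fun _ _ => hf0 _) h1
    _ ≤ ∑ j, l1Norm (tsProj (E j) x) := Finset.sum_le_sum fun _ _ => hf _
    _ ≤ l1Norm x := hE.sum_l1Norm_tsProj_le x

lemma tnormAux_le_l1Norm (h1 : θ ≤ 1) (S : Set (Finset ℕ+)) (m : ℕ) (x : ℕ+ →₀ ℝ) :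
    tnormAux θ S m x ≤ l1Norm x := by
  induction m generalizing x with
  | zero => exact ciSup_le (abs_apply_le_l1Norm x)
  | succ m ih =>
    refine max_le (ih x) (Real.sSup_le ?_ (l1Norm_nonneg x))
    rintro _ ⟨d, E, hE, rfl⟩
    exact hE.mul_sum_le_l1Norm h1 (tnormAux_nonneg θ S m) ih x

lemma TsAdmissible.mul_sum_tnormAux_le (hE : TsAdmissible S E) (h1 : θ ≤ 1) (m : ℕ)
    (x : ℕ+ →₀ ℝ) : θ * ∑ j, tnormAux θ S m (tsProj (E j) x) ≤ tnormAux θ S (m + 1) x := by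
  refine le_max_of_le_right (le_csSup ⟨l1Norm x, ?_⟩ ⟨d, E, hE, rfl⟩)
  rintro _ ⟨d, E, hE, rfl⟩
  exact hE.mul_sum_le_l1Norm h1 (tnormAux_nonneg θ S m) (tnormAux_le_l1Norm h1 S m) x

lemma bddAbove_range_tnormAux (h1 : θ ≤ 1) (S : Set (Finset ℕ+)) (x : ℕ+ →₀ ℝ) :
    BddAbove (Set.range fun m => tnormAux θ S m x) :=
  ⟨l1Norm x, Set.forall_mem_range.2 fun m => tnormAux_le_l1Norm h1 S m x⟩

lemma tendsto_tnormAux (h1 : θ ≤ 1) (S : Set (Finset ℕ+)) (x : ℕ+ →₀ ℝ) :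
    Filter.Tendsto (fun m => tnormAux θ S m x) Filter.atTop (nhds (tnorm θ S x)) :=
  tendsto_atTop_ciSup (monotone_nat_of_le_succ fun _ => le_max_left _ _)
    (bddAbove_range_tnormAux h1 S x)

lemma tnormAux_le_tnorm (h1 : θ ≤ 1) (S : Set (Finset ℕ+)) (m : ℕ) (x : ℕ+ →₀ ℝ) :
    tnormAux θ S m x ≤ tnorm θ S x :=
  le_ciSup (bddAbove_range_tnormAux h1 S x) m

lemma tnorm_le_l1Norm (h1 : θ ≤ 1) (S : Set (Finset ℕ+)) (x : ℕ+ →₀ ℝ) : tnorm θ S x ≤ l1Norm x :=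
  ciSup_le fun m => tnormAux_le_l1Norm h1 S m x

lemma tnorm_nonneg (θ : ℝ) (S : Set (Finset ℕ+)) (x : ℕ+ →₀ ℝ) : 0 ≤ tnorm θ S x :=
  Real.iSup_nonneg fun m => tnormAux_nonneg θ S m x

lemma abs_apply_le_tnorm (h1 : θ ≤ 1) (S : Set (Finset ℕ+)) (x : ℕ+ →₀ ℝ) (i : ℕ+) :
    |x i| ≤ tnorm θ S x :=
  (le_ciSup (f := fun i => |x i|) ⟨_, Set.forall_mem_range.2 (abs_apply_le_l1Norm x)⟩ i).trans
    (tnormAux_le_tnorm h1 S 0 x)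

lemma TsAdmissible.mul_sum_tnorm_le (hE : TsAdmissible S E) (h1 : θ ≤ 1) (x : ℕ+ →₀ ℝ) :
    θ * ∑ j, tnorm θ S (tsProj (E j) x) ≤ tnorm θ S x :=
  le_of_tendsto ((tendsto_finsetSum _ fun _ _ => tendsto_tnormAux h1 S _).const_mul θ)
    (Filter.Eventually.of_forall fun m =>
      (hE.mul_sum_tnormAux_le h1 m x).trans (tnormAux_le_tnorm h1 S (m + 1) x))

/-- The norm is the least solution of the implicit equation defining it. -/
lemma tnorm_le (h0 : 0 ≤ θ) (h1 : θ ≤ 1) {x : ℕ+ →₀ ℝ} {C : ℝ} (hC : ∀ i, |x i| ≤ C)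
    (h : ∀ (d : ℕ) (E : Fin d → Finset ℕ+), TsAdmissible S E →
      θ * ∑ j, tnorm θ S (tsProj (E j) x) ≤ C) : tnorm θ S x ≤ C := by
  refine ciSup_le fun m => ?_
  induction m with
  | zero => exact ciSup_le hC
  | succ m ih =>
    refine max_le ih (Real.sSup_le ?_ ((abs_nonneg _).trans (hC 1)))
    rintro _ ⟨d, E, hE, rfl⟩
    refine (mul_le_mul_of_nonneg_left ?_ h0).trans (h d E hE)
    exact Finset.sum_le_sum fun j _ => tnormAux_le_tnorm h1 S m _

lemma tnorm_mono (h0 : 0 ≤ θ) (h1 : θ ≤ 1) (S : Set (Finset ℕ+)) {x y : ℕ+ →₀ ℝ}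
    (hyx : ∀ i, |y i| ≤ |x i|) : tnorm θ S y ≤ tnorm θ S x := by
  refine ciSup_le fun m => ?_
  induction m generalizing x y with
  | zero => exact ciSup_le fun i => (hyx i).trans (abs_apply_le_tnorm h1 S x i)
  | succ m ih =>
    refine max_le (ih hyx) (Real.sSup_le ?_ (tnorm_nonneg θ S x))
    rintro _ ⟨d, E, hE, rfl⟩
    refine (mul_le_mul_of_nonneg_left ?_ h0).trans (hE.mul_sum_tnorm_le h1 x)
    refine Finset.sum_le_sum fun j _ => ih fun i => ?_
    simp only [tsProj_apply]
    split_ifs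
    · exact hyx i
    · rfl

lemma tnorm_add_le (h0 : 0 ≤ θ) (h1 : θ ≤ 1) (S : Set (Finset ℕ+)) (x y : ℕ+ →₀ ℝ) :
    tnorm θ S (x + y) ≤ tnorm θ S x + tnorm θ S y := by
  have hcoord := abs_apply_le_tnorm h1 S
  refine ciSup_le fun m => ?_
  induction m generalizing x y with
  | zero => exact ciSup_le fun i => (abs_add_le _ _).trans (add_le_add (hcoord x i) (hcoord y i))
  | succ m ih =>
    refine max_le (ih x y)
      (Real.sSup_le ?_ (add_nonneg (tnorm_nonneg θ S x) (tnorm_nonneg θ S y)))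
    rintro _ ⟨d, E, hE, rfl⟩
    calc θ * ∑ j, tnormAux θ S m (tsProj (E j) (x + y))
        ≤ θ * ∑ j, (tnorm θ S (tsProj (E j) x) + tnorm θ S (tsProj (E j) y)) := by
          gcongr with j
          rw [tsProj_add]
          exact ih _ _
      _ = θ * ∑ j, tnorm θ S (tsProj (E j) x) + θ * ∑ j, tnorm θ S (tsProj (E j) y) := by
          rw [Finset.sum_add_distrib, mul_add]
      _ ≤ tnorm θ S x + tnorm θ S y :=
          add_le_add (hE.mul_sum_tnorm_le h1 x) (hE.mul_sum_tnorm_le h1 y)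

/-- The sets of an admissible family are disjoint, so they collect at most `θ ‖y‖₁` from `y`. -/
lemma tnorm_le_max_add (h0 : 0 ≤ θ) (h1 : θ ≤ 1) {x y z : ℕ+ →₀ ℝ} {C : ℝ}
    (hC : ∀ i, |z i| ≤ C) (hz : ∀ i, |z i| ≤ |x i + y i|) :
    tnorm θ S z ≤ max C (tnorm θ S x + θ * l1Norm y) := by
  refine tnorm_le h0 h1 (fun i => (hC i).trans (le_max_left _ _)) fun d E hE => ?_
  refine le_max_of_le_right ?_
  calc θ * ∑ j, tnorm θ S (tsProj (E j) z)
      ≤ θ * ∑ j, (tnorm θ S (tsProj (E j) x) + l1Norm (tsProj (E j) y)) := by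
        gcongr with j
        have hproj : ∀ i, |tsProj (E j) z i| ≤ |(tsProj (E j) x + tsProj (E j) y) i| := by
          intro i
          simp only [← tsProj_add, tsProj_apply]
          split_ifs
          · exact hz i
          · rfl
        exact (tnorm_mono h0 h1 S hproj).trans ((tnorm_add_le h0 h1 S _ _).trans
          (add_le_add_right (tnorm_le_l1Norm h1 S _) _))
    _ = θ * ∑ j, tnorm θ S (tsProj (E j) x) + θ * ∑ j, l1Norm (tsProj (E j) y) := by
        rw [Finset.sum_add_distrib, mul_add]
    _ ≤ tnorm θ S x + θ * l1Norm y :=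
        add_le_add (hE.mul_sum_tnorm_le h1 x)
          (mul_le_mul_of_nonneg_left (hE.sum_l1Norm_tsProj_le y) h0)

lemma tnorm_add_single_le (h0 : 0 ≤ θ) (h1 : θ ≤ 1) (S : Set (Finset ℕ+)) {x : ℕ+ →₀ ℝ} {i : ℕ+}
    {t r : ℝ} (hr : 0 ≤ r) (ht : |x i + t| ≤ |x i| + r) :
    tnorm θ S (x + Finsupp.single i t) ≤ max |x i + t| (tnorm θ S x + θ * r) := by
  obtain ⟨s, hs, hxs⟩ : ∃ s, |s| = r ∧ |x i + s| = |x i| + r := by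
    rcases le_total 0 (x i) with hx | hx
    · exact ⟨r, abs_of_nonneg hr, by rw [abs_of_nonneg hx, abs_of_nonneg (add_nonneg hx hr)]⟩
    · refine ⟨-r, by rw [abs_neg, abs_of_nonneg hr], ?_⟩
      rw [abs_of_nonpos hx, abs_of_nonpos (by linarith)]
      ring
  have hle : tnorm θ S x ≤ tnorm θ S x + θ * r := le_add_of_nonneg_right (mul_nonneg h0 hr)
  have hz := tnorm_le_max_add (z := x + Finsupp.single i t) (y := Finsupp.single i s)
    (C := max |x i + t| (tnorm θ S x + θ * r)) h0 h1 (S := S) (x := x) (fun j => ?_) fun j => ?_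
  · rwa [l1Norm_single, hs, max_eq_left (le_max_right _ _)] at hz
  all_goals
    rw [Finsupp.add_apply]
    rcases eq_or_ne j i with rfl | hj
  · simp
  · rw [Finsupp.single_eq_of_ne hj, add_zero]
    exact le_max_of_le_right ((abs_apply_le_tnorm h1 S x j).trans hle)
  · simpa [hxs] using ht
  · simp [Finsupp.single_eq_of_ne hj]

lemma TsAdmissible.subsingleton_of_one_mem (hE : TsAdmissible S E)
    (hS : ∀ F ∈ S, 1 ∈ F → F.card ≤ 1) {j : Fin d} (hj : 1 ∈ E j) : Subsingleton (Fin d) := by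
  obtain ⟨-, -, μ, hμ, hμS⟩ := id hE
  have hμj : μ j = 1 := le_antisymm ((hμ j).2 hj) one_le
  have hcard := hS _ hμS (Finset.mem_image.2 ⟨j, Finset.mem_univ j, hμj⟩)
  refine ⟨fun a b => hE.eq_of_mem (hμ a).1 ?_⟩
  rw [Finset.card_le_one.1 hcard (μ a) (by simp) (μ b) (by simp)]
  exact (hμ b).1

lemma tnorm_le_max_apply_one (h0 : 0 ≤ θ) (h1 : θ ≤ 1 / 2)
    (hS : ∀ F ∈ S, 1 ∈ F → F.card ≤ 1) (x : ℕ+ →₀ ℝ) :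
    tnorm θ S x ≤ max |x 1| (tnorm θ S (x.erase 1)) := by
  have h1' : θ ≤ 1 := h1.trans (by norm_num)
  refine tnorm_le h0 h1' (fun i => ?_) fun d E hE => ?_
  · rcases eq_or_ne i 1 with rfl | hi
    · exact le_max_left _ _
    · rw [← Finsupp.erase_ne hi]
      exact le_max_of_le_right (abs_apply_le_tnorm h1' S _ i)
  by_cases h : ∃ j, 1 ∈ E j
  · obtain ⟨j, hj⟩ := h
    have := hE.subsingleton_of_one_mem hS hj
    have hx : tnorm θ S x ≤ tnorm θ S (x.erase 1) + |x 1| := by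
      rw [← l1Norm_single 1 (x 1)]
      nth_rw 1 [← Finsupp.erase_add_single 1 x]
      exact (tnorm_add_le h0 h1' S _ _).trans (add_le_add_right (tnorm_le_l1Norm h1' S _) _)
    calc θ * ∑ j, tnorm θ S (tsProj (E j) x) = θ * tnorm θ S (tsProj (E j) x) := by
          rw [Fintype.sum_subsingleton _ j]
      _ ≤ θ * tnorm θ S x := by
          gcongr
          refine tnorm_mono h0 h1' S fun i => ?_
          rw [tsProj_apply]
          split_ifs <;> simp
      _ ≤ 1 / 2 * (tnorm θ S (x.erase 1) + |x 1|) :=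
          mul_le_mul h1 hx (tnorm_nonneg θ S x) (by norm_num)
      _ ≤ max |x 1| (tnorm θ S (x.erase 1)) := by
          linarith [le_max_left |x 1| (tnorm θ S (x.erase 1)),
            le_max_right |x 1| (tnorm θ S (x.erase 1))]
  · refine le_max_of_le_right (le_trans (le_of_eq ?_) (hE.mul_sum_tnorm_le h1' (x.erase 1)))
    congr! 3 with j
    ext i
    simp only [tsProj_apply]
    split_ifs with hi
    · exact (Finsupp.erase_ne fun hi1 => h ⟨j, by rwa [← hi1]⟩).symm
    · rfl

lemma mul_sum_tnorm_Icc_le (h1 : θ ≤ 1) {F : Finset ℕ+} (hF : F ∈ S) {b : ℕ+ → ℕ+}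
    (hb : ∀ a ∈ F, a ≤ b a) (hlt : ∀ a ∈ F, ∀ a' ∈ F, a < a' → b a < a') (x : ℕ+ →₀ ℝ) :
    θ * ∑ a ∈ F, tnorm θ S (tsProj (Finset.Icc a (b a)) x) ≤ tnorm θ S x := by
  let o := F.orderEmbOfFin rfl
  have ho : ∀ i, o i ∈ F := F.orderEmbOfFin_mem rfl
  have hadm : TsAdmissible S fun i => Finset.Icc (o i) (b (o i)) := by
    refine ⟨fun i => Finset.nonempty_Icc.2 (hb _ (ho i)), fun i j hij a ha a' ha' => ?_, o,
      fun i => ?_, ?_⟩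
    · exact (Finset.mem_Icc.1 ha).2.trans_lt ((hlt _ (ho i) _ (ho j) (o.strictMono hij)).trans_le
        (Finset.mem_Icc.1 ha').1)
    · rw [Finset.coe_Icc]
      exact isLeast_Icc (hb _ (ho i))
    · rwa [Finset.image_orderEmbOfFin_univ]
  calc θ * ∑ a ∈ F, tnorm θ S (tsProj (Finset.Icc a (b a)) x)
      = θ * ∑ i, tnorm θ S (tsProj (Finset.Icc (o i) (b (o i))) x) := by
        congr 1
        conv_lhs => rw [← F.map_orderEmbOfFin_univ rfl, Finset.sum_map]
        rfl
    _ ≤ tnorm θ S x := hadm.mul_sum_tnorm_le h1 x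

lemma abs_apply_le_tnorm_tsProj (h1 : θ ≤ 1) (S : Set (Finset ℕ+)) {A : Finset ℕ+} {i : ℕ+}
    (hi : i ∈ A) (x : ℕ+ →₀ ℝ) : |x i| ≤ tnorm θ S (tsProj A x) := by
  simpa [tsProj_apply, hi] using abs_apply_le_tnorm h1 S (tsProj A x) i

/-- Lower estimate from the admissible family `{p} < [q, N] < {a₁} < ⋯ < {a_r}`,
where `A = {a₁, …, a_r}`. -/
lemma mul_add_tnorm_Icc_add_sum_le (h0 : 0 ≤ θ) (h1 : θ ≤ 1) {p q N : ℕ+} (hpq : p < q)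
    (hqN : q ≤ N) {A : Finset ℕ+} (hA : ∀ a ∈ A, N < a) (hS : insert p (insert q A) ∈ S)
    (x : ℕ+ →₀ ℝ) :
    θ * (|x p| + tnorm θ S (tsProj (Finset.Icc q N) x) + ∑ a ∈ A, |x a|) ≤ tnorm θ S x := by
  have hqA : q ∉ A := fun h => (hA q h).not_ge hqN
  have hpA : p ∉ insert q A := fun h => (Finset.mem_insert.1 h).elim hpq.ne fun h =>
    (hA p h).not_gt (hpq.trans_le hqN)
  let b : ℕ+ → ℕ+ := Function.update id q N
  have hbA : ∀ a ≠ q, b a = a := fun a ha => Function.update_of_ne ha _ _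
  have hbq : b q = N := Function.update_self ..
  refine le_trans ?_
    (mul_sum_tnorm_Icc_le h1 hS (b := b) (fun a _ => ?_) (fun a _ a' ha' h => ?_) x)
  · rw [Finset.sum_insert hpA, Finset.sum_insert hqA, ← add_assoc, hbq, hbA p hpq.ne]
    gcongr with a ha
    · exact abs_apply_le_tnorm_tsProj h1 S (by simp) x
    · rw [hbA a (ne_of_mem_of_not_mem ha hqA)]
      exact abs_apply_le_tnorm_tsProj h1 S (by simp) x
  · rcases eq_or_ne a q with rfl | ha
    · rwa [hbq]
    · rw [hbA a ha]
  · rcases eq_or_ne a q with rfl | ha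
    · rw [hbq]
      simp only [Finset.mem_insert] at ha'
      rcases ha' with rfl | rfl | ha'
      · exact absurd h hpq.not_gt
      · exact absurd h (lt_irrefl _)
      · exact hA a' ha'
    · rwa [hbA a ha]

lemma tnorm_indVec_le_card (h1 : θ ≤ 1) (S : Set (Finset ℕ+)) (A : Finset ℕ+) :
    tnorm θ S (indVec A) ≤ A.card :=
  (tnorm_le_l1Norm h1 S _).trans_eq (l1Norm_indVec A)

lemma tnorm_indVec_le (h0 : 0 ≤ θ) (h1 : θ ≤ 1) (S : Set (Finset ℕ+)) (A : Finset ℕ+) :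
    tnorm θ S (indVec A) ≤ max 1 (θ * A.card) := by
  refine tnorm_le h0 h1 (fun i => ?_) fun d E hE => ?_
  · rw [indVec_apply]
    split_ifs <;> simp
  · refine le_max_of_le_right (mul_le_mul_of_nonneg_left ?_ h0)
    simp only [tsProj_indVec]
    exact (Finset.sum_le_sum fun j _ => tnorm_indVec_le_card h1 S _).trans (hE.sum_card_inter_le A)

lemma mul_card_le_tnorm_indVec (h0 : 0 ≤ θ) (h1 : θ ≤ 1) {A : Finset ℕ+} (hA : A ∈ S) :
    θ * A.card ≤ tnorm θ S (indVec A) := by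
  refine le_trans ?_ (mul_sum_tnorm_Icc_le h1 hA (b := id) (fun a _ => le_rfl)
    (fun _ _ _ _ h => h) _)
  rw [Finset.cast_card]
  gcongr with a ha
  simpa [indVec_apply, ha] using abs_apply_le_tnorm_tsProj h1 S
    (Finset.left_mem_Icc.2 (le_refl a)) (indVec A)

lemma TsAdmissible.mem_of_card_inter_le_one (hE : TsAdmissible S E) (hS : IsHereditarySpreading S)
    {G : Finset ℕ+} (hcov : ∀ a ∈ G, ∃ j, a ∈ E j) (hcard : ∀ j, (G ∩ E j).card ≤ 1) : G ∈ S := by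
  obtain ⟨-, hlt, μ, hμ, hμS⟩ := id hE
  have hG : ∀ a ∈ G, ∃ i, ∃ j, a ∈ E j ∧ μ j = i := fun a ha =>
    let ⟨j, hj⟩ := hcov a ha; ⟨_, j, hj, rfl⟩
  choose! σ hσ using hG
  refine hS (σ := σ) ⟨fun a ha => ?_, fun a ha => ?_, fun a ha a' ha' h => ?_⟩ hμS
  · obtain ⟨j, -, hj⟩ := hσ a ha
    exact hj ▸ Finset.mem_image_of_mem μ (Finset.mem_univ j)
  · obtain ⟨j, haj, hj⟩ := hσ a ha
    exact hj ▸ (hμ j).2 haj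
  · obtain ⟨j, haj, hj⟩ := hσ a ha
    obtain ⟨j', haj', hj'⟩ := hσ a' ha'
    rw [← hj, ← hj']
    rcases lt_trichotomy j j' with hjj | rfl | hjj
    · exact hlt j j' hjj _ (hμ j).1 _ (hμ j').1
    · exact absurd (Finset.card_le_one.1 (hcard j) a (Finset.mem_inter.2 ⟨ha, haj⟩) a'
        (Finset.mem_inter.2 ⟨ha', haj'⟩)) h.ne
    · exact absurd h (hlt j' j hjj a' haj' a haj).not_gt

lemma TsAdmissible.sum_tnorm_indVec_inter_le (hE : TsAdmissible S E)
    (hS : IsHereditarySpreading S) (h0 : 0 ≤ θ) (h1 : θ ≤ 1 / 2) {G : Finset ℕ+} (hG : G ∉ S) :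
    ∑ j, tnorm θ S (indVec (G ∩ E j)) ≤ G.card - 1 := by
  have h1' : θ ≤ 1 := h1.trans (by norm_num)
  by_cases hex : ∃ j, 2 ≤ (G ∩ E j).card
  · obtain ⟨j, hj⟩ := hex
    have hj' : (2 : ℝ) ≤ (G ∩ E j).card := by exact_mod_cast hj
    have hdrop : tnorm θ S (indVec (G ∩ E j)) ≤ (G ∩ E j).card - 1 :=
      (tnorm_indVec_le h0 h1' S _).trans (max_le (by linarith) (by nlinarith))
    have hsum := hE.sum_card_inter_le G
    have hrest := Finset.sum_le_sum (s := Finset.univ.erase j) fun i _ =>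
      tnorm_indVec_le_card h1' S (G ∩ E i)
    rw [← Finset.add_sum_erase _ _ (Finset.mem_univ j)] at hsum ⊢
    linarith
  · push Not at hex
    obtain ⟨a, haG, ha⟩ : ∃ a ∈ G, ∀ j, a ∉ E j := by
      by_contra! hcov
      exact hG (hE.mem_of_card_inter_le_one hS hcov fun j => Nat.lt_succ_iff.1 (hex j))
    have herase : ∀ j, G.erase a ∩ E j = G ∩ E j := fun j => by
      rw [Finset.erase_inter, Finset.erase_eq_of_notMem fun h => ha j (Finset.mem_inter.1 h).2]
    have hsum := hE.sum_card_inter_le (G.erase a)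
    rw [Finset.cast_card_erase_of_mem haG] at hsum
    simp only [herase] at hsum
    exact (Finset.sum_le_sum fun _ _ => tnorm_indVec_le_card h1' S _).trans hsum

lemma tnorm_indVec_le_of_notMem (hS : IsHereditarySpreading S) (h0 : 0 ≤ θ) (h1 : θ ≤ 1 / 2)
    {G : Finset ℕ+} (hG : G ∉ S) : tnorm θ S (indVec G) ≤ max 1 (θ * (G.card - 1)) := by
  refine tnorm_le h0 (h1.trans (by norm_num)) (fun i => ?_) fun d E hE => ?_
  · rw [indVec_apply]
    split_ifs <;> simp
  · simp only [tsProj_indVec]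
    exact le_max_of_le_right (mul_le_mul_of_nonneg_left
      (hE.sum_tnorm_indVec_inter_le hS h0 h1 hG) h0)

end Norm

/-! ### Injections that do not increase the norm of sums of unit vectors -/

section Rigidity

lemma eq_id_of_injective_of_le {π : ℕ+ → ℕ+} (hπ : Function.Injective π) (hle : ∀ i, π i ≤ i) :
    π = id := by
  funext i
  induction i using PNat.strongInductionOn with
  | _ i ih =>
    by_contra hne
    exact hne (hπ (ih _ (lt_of_le_of_ne (hle i) hne)))

lemma infinite_setOf_le_apply {π : ℕ+ → ℕ+} (hπ : Function.Injective π) :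
    {a | a ≤ π a}.Infinite := by
  intro hfin
  obtain ⟨N, hN⟩ := hfin.bddAbove
  obtain ⟨K, hK⟩ := ((Finset.Icc 1 N).image π).bddAbove
  -- otherwise `π` maps the `M` numbers `1, …, M` into the `M - 1` numbers `1, …, M - 1`
  let M : ℕ+ := max K N + 1
  have hmaps : Set.MapsTo π (Finset.Icc 1 M) (Finset.Ico 1 M) := by
    intro a ha
    simp only [Finset.coe_Icc, Finset.coe_Ico, Set.mem_Icc, Set.mem_Ico] at ha ⊢
    refine ⟨one_le, ?_⟩
    by_cases h : a ≤ N
    · have hKa : π a ≤ K := hK (by simpa using ⟨a, h, rfl⟩)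
      exact (hKa.trans (le_max_left K N)).trans_lt (PNat.lt_add_right _ 1)
    · exact (not_le.1 fun hle => h (hN hle)).trans_le ha.2
  have hcard := Finset.card_le_card_of_injOn π hmaps hπ.injOn
  have hM : (1 : ℕ) < M := by exact_mod_cast PNat.lt_add_left 1 (max K N)
  simp only [PNat.card_Icc, PNat.card_Ico, PNat.one_coe] at hcard
  omega

lemma exists_infinite_strictMonoOn {π : ℕ+ → ℕ+} (hπ : {a | a ≤ π a}.Infinite) (M : ℕ+) :
    ∃ A : Set ℕ+, A.Infinite ∧ StrictMonoOn π A ∧ ∀ a ∈ A, a ≤ π a ∧ M < a := by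
  obtain ⟨g, hg, hlt⟩ := exists_seq_of_forall_finset_exists (fun a => a ≤ π a ∧ M < a)
    (fun x y => x < y ∧ π x < π y) fun s _ => by
      obtain ⟨N, hN⟩ := (insert M (s ∪ s.image π)).bddAbove
      obtain ⟨y, hy, hNy⟩ := hπ.exists_gt N
      have hlt : ∀ a ∈ insert M (s ∪ s.image π), a < y := fun a ha => (hN ha).trans_lt hNy
      exact ⟨y, ⟨hy, hlt M (by simp)⟩, fun x hx => ⟨hlt x (by simp [hx]),
        (hlt (π x) (by simp [Finset.mem_image_of_mem π hx])).trans_le hy⟩⟩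
  have hmono : StrictMono g := fun i j hij => (hlt i j hij).1
  refine ⟨Set.range g, Set.infinite_range_of_injective hmono.injective, ?_,
    Set.forall_mem_range.2 hg⟩
  rintro _ ⟨i, rfl⟩ _ ⟨j, rfl⟩ hij
  exact (hlt i j (hmono.lt_iff_lt.1 hij)).2

lemma insert_mem_schreier_of_card_le {n : ℕ} (hn : 2 ≤ n) {k m : ℕ+} {H : Finset ℕ+} (hm : 2 ≤ m)
    (hH : ∀ a ∈ H, max m k < a) (hk : H.card ≤ k) : insert m H ∈ Schreier n := by
  have hH1 : H ∈ Schreier 1 := fun a ha =>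
    hk.trans (by exact_mod_cast ((le_max_right m k).trans_lt (hH a ha)).le)
  have hlt : ∀ a ∈ H, m < a := fun a ha => (le_max_left m k).trans_lt (hH a ha)
  exact monotone_schreier hn (union_mem_schreier_succ (singleton_mem_schreier 1 m) hH1
    (by simpa using hlt) (by simpa using ⟨hm, fun a ha => hm.trans (hlt a ha).le⟩))

lemma exists_spreadsInto_image {π : ℕ+ → ℕ+} {F : Finset ℕ+} (hπ : StrictMonoOn π F)
    (hle : ∀ a ∈ F, a ≤ π a) : ∃ σ, SpreadsInto σ (F.image π) F := by
  have hinv : ∀ a ∈ F, Function.invFunOn π F (π a) = a := hπ.injOn.leftInvOn_invFunOn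
  refine ⟨Function.invFunOn π F, ?_, ?_, ?_⟩
  · exact Finset.forall_mem_image.2 fun a ha => (hinv a ha).symm ▸ ha
  · exact Finset.forall_mem_image.2 fun a ha => (hinv a ha).symm ▸ hle a ha
  · rw [Finset.coe_image]
    rintro _ ⟨a, ha, rfl⟩ _ ⟨c, hc, rfl⟩ h
    rw [hinv a ha, hinv c hc]
    exact (hπ.lt_iff_lt ha hc).1 h

/-- The room between `m` and `π m` accommodates the image of the new maximum `q`. -/
lemma image_insert_mem_schreier_succ {n : ℕ} {π : ℕ+ → ℕ+} {F : Finset ℕ+} {m q : ℕ+}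
    (hF : F ∈ Schreier (n + 1)) (hm : m ∈ F) (hmF : ∀ a ∈ F, m ≤ a) (hmπ : m < π m)
    (hq : ∀ a ∈ F, a < q) (hπ : StrictMonoOn π ↑(insert q F)) (hle : ∀ a ∈ F, a ≤ π a) :
    (insert q F).image π ∈ Schreier (n + 1) := by
  have hsub : F ⊆ insert q F := Finset.subset_insert q F
  have hπF : StrictMonoOn π F := hπ.mono (Finset.coe_subset.2 hsub)
  have hmq : ∀ a ∈ F, π a < π q := fun a ha =>
    hπ (hsub ha) (Finset.mem_insert_self q F) (hq a ha)
  obtain ⟨σ, hσ⟩ := exists_spreadsInto_image hπF hle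
  rw [Finset.image_insert]
  exact insert_mem_schreier_succ hF hσ hm
    (Finset.forall_mem_image.2 fun a ha => hmπ.trans_le (hπF.monotoneOn hm ha (hmF a ha)))
    (hmπ.trans (hmq m hm)) (Finset.forall_mem_image.2 hmq)

/-- The set `G` is a minimal non-member of `S_n` among the sets with least element `m` and other
elements in a set where `π` is increasing; it becomes a member without its maximum. -/
lemma exists_notMem_schreier_image_mem_schreier {n : ℕ} (hn : 2 ≤ n) (k : ℕ+) {π : ℕ+ → ℕ+}
    (hπ : {a | a ≤ π a}.Infinite) {m : ℕ+} (hm : 2 ≤ m) (hmπ : m < π m) :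
    ∃ G : Finset ℕ+, 1 ∉ G ∧ k < G.card ∧ G ∉ Schreier n ∧ G.image π ∈ Schreier n := by
  obtain ⟨A, hA, hmono, hAle⟩ := exists_infinite_strictMonoOn hπ (max (π m) k)
  obtain ⟨F, hFA, hF⟩ := exists_finset_notMem_schreier n hA
  obtain ⟨H, hHF, hH⟩ := exists_minimal_le_of_wellFoundedLT (fun H => insert m H ∉ Schreier n) F
    fun h => hF ((isHereditarySpreading_schreier n).mono (Finset.subset_insert m F) h)
  have hHA : ∀ a ∈ H, a ∈ A := fun a ha => hFA (hHF ha)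
  have hπm : ∀ a ∈ H, π m < a := fun a ha => (le_max_left _ _).trans_lt (hAle a (hHA a ha)).2
  have hm_lt : ∀ a ∈ H, m < a := fun a ha => hmπ.trans (hπm a ha)
  have hle : ∀ a ∈ insert m H, a ≤ π a :=
    (Finset.forall_mem_insert ..).2 ⟨hmπ.le, fun a ha => (hAle a (hHA a ha)).1⟩
  have hmono' : StrictMonoOn π ↑(insert m H) := by
    rw [Finset.coe_insert, strictMonoOn_insert_iff_of_forall_ge fun a ha => (hm_lt a ha).le]
    exact ⟨fun a ha _ => (hπm a ha).trans_le (hle a (Finset.mem_insert_of_mem ha)),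
      hmono.mono hHA⟩
  have hcard : k < H.card := by
    by_contra! hk
    exact hH.1 (insert_mem_schreier_of_card_le hn hm (fun a ha => max_lt (hm_lt a ha)
      ((le_max_right _ _).trans_lt (hAle a (hHA a ha)).2)) hk)
  have hne : H.Nonempty := Finset.card_pos.1 (k.pos.trans hcard)
  have hq := H.max'_mem hne
  set q := H.max' hne
  have hinsert : insert q (insert m (H.erase q)) = insert m H := by
    rw [Finset.insert_comm, Finset.insert_erase hq]
  have hmem : insert m (H.erase q) ∈ Schreier n := by
    simpa using hH.not_prop_of_lt (Finset.erase_ssubset hq)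
  have h1 : 1 ∉ insert m H := fun h => by
    have hm1 : m ≤ 1 := by
      rcases Finset.mem_insert.1 h with h | h
      exacts [h.ge, (hm_lt 1 h).le]
    exact absurd (hm.trans hm1) (by decide)
  refine ⟨insert m H, h1, hcard.trans_le (Finset.card_le_card (H.subset_insert m)), hH.1, ?_⟩
  obtain ⟨n, rfl⟩ := Nat.exists_eq_add_of_le' (one_le_two.trans hn)
  rw [← hinsert] at hmono' hle ⊢
  refine image_insert_mem_schreier_succ hmem (by simp) ?_ hmπ ?_ hmono'
    fun a ha => hle a (Finset.mem_insert_of_mem ha)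
  · exact (Finset.forall_mem_insert ..).2
      ⟨le_rfl, fun a ha => (hm_lt a (Finset.mem_of_mem_erase ha)).le⟩
  · exact (Finset.forall_mem_insert ..).2
      ⟨hm_lt q hq, fun a ha => Finset.lt_max'_of_mem_erase_max' H hne ha⟩

lemma eq_id_of_tnorm_indVec_image_le {θ : ℝ} {k : ℕ+} (hk : 2 ≤ k) (hθ : θ * k = 1) {n : ℕ}
    (hn : 2 ≤ n) {π : ℕ+ → ℕ+} (hπ : Function.Injective π) (hπ1 : π 1 = 1)
    (hle : ∀ G : Finset ℕ+, 1 ∉ G →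
      tnorm θ (Schreier n) (indVec (G.image π)) ≤ tnorm θ (Schreier n) (indVec G)) :
    π = id := by
  have hk0 : (2 : ℝ) ≤ k := by exact_mod_cast hk
  have h0 : 0 < θ := by nlinarith
  have h1 : θ ≤ 1 / 2 := by nlinarith
  refine eq_id_of_injective_of_le hπ ?_
  by_contra! ⟨m, hm⟩
  have hm2 : 2 ≤ m := Order.add_one_le_of_lt (one_le.lt_of_ne fun h => by simp_all)
  obtain ⟨G, h1G, hkG, hG, hπG⟩ :=
    exists_notMem_schreier_image_mem_schreier hn k (infinite_setOf_le_apply hπ) hm2 hm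
  have hone : 1 < θ * G.card := by
    rw [← hθ]
    exact mul_lt_mul_of_pos_left (by exact_mod_cast hkG) h0
  have hchain : θ * G.card ≤ max 1 (θ * (G.card - 1)) :=
    calc θ * G.card = θ * (G.image π).card := by rw [Finset.card_image_of_injective G hπ]
      _ ≤ tnorm θ (Schreier n) (indVec (G.image π)) :=
        mul_card_le_tnorm_indVec h0.le (by linarith) hπG
      _ ≤ tnorm θ (Schreier n) (indVec G) := hle G h1G
      _ ≤ max 1 (θ * (G.card - 1)) :=
        tnorm_indVec_le_of_notMem (isHereditarySpreading_schreier n) h0.le h1 hG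
  rcases le_max_iff.1 hchain with h | h <;> linarith

end Rigidity

lemma eq_neg_of_two_le_abs_sub {s t : ℝ} (hs : |s| ≤ 1) (ht : |t| ≤ 1) (hst : 2 ≤ |s - t|) :
    s = -t := by
  rw [abs_le] at hs ht
  rcases le_abs.1 hst with h | h <;> linarith

lemma abs_sub_and_abs_add_of_one_lt_abs_sub {s t : ℝ} (hs : |s| ≤ 1) (ht : |t| = 1)
    (hst : 1 < |s - t|) : |s - t| = 1 + |s| ∧ |s + t| = 1 - |s| := by
  rw [abs_le] at hs
  rcases eq_or_eq_neg_of_abs_eq ht with rfl | rfl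
  · rw [abs_of_nonpos (by linarith)] at hst
    rw [abs_of_nonpos (by linarith : s - 1 ≤ 0), abs_of_nonneg (by linarith : 0 ≤ s + 1),
      abs_of_nonpos (by linarith : s ≤ 0)]
    constructor <;> ring
  · rw [abs_of_nonneg (by linarith)] at hst
    rw [abs_of_nonneg (by linarith : 0 ≤ s - -1), abs_of_nonpos (by linarith : s + -1 ≤ 0),
      abs_of_nonneg (by linarith : 0 ≤ s)]
    constructor <;> ring

section Isometry

variable {E : Type*} [NormedAddCommGroup E] {s t : Set E}

lemma norm_coe_map_sub (f : s ≃ᵢ t) (x y : s) : ‖(f x : E) - f y‖ = ‖(x : E) - y‖ := by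
  simpa only [Subtype.dist_eq, dist_eq_norm] using f.dist_eq x y

lemma norm_coe_map_sub_map_neg_self [NormedSpace ℝ E]
    (f : Metric.sphere (0 : E) 1 ≃ᵢ t) (x : Metric.sphere (0 : E) 1) :
    ‖(f x : E) - f (-x)‖ = 2 := by
  rw [norm_coe_map_sub, coe_neg_sphere, sub_neg_eq_add, ← two_smul ℝ (x : E), norm_smul,
    norm_eq_of_mem_sphere, Real.norm_two, mul_one]

end Isometry

/-! ### The unit vector basis -/

section Basis

open Filter Topology

variable {X : Type*} [NormedAddCommGroup X] [NormedSpace ℝ X] {θ : ℝ} {S : Set (Finset ℕ+)}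

/-- The sequence `e` has the norm of the unit vectors of the Tsirelson space with parameters
`θ` and `S`, i.e. `e_i ↦ e i` extends to an isometric embedding of `c₀₀`. -/
def HasTsirelsonNorm (θ : ℝ) (S : Set (Finset ℕ+)) (e : ℕ+ → X) : Prop :=
  ∀ a : ℕ+ →₀ ℝ, ‖a.sum fun i c => c • e i‖ = tnorm θ S a

namespace HasTsirelsonNorm

lemma norm_sum_smul {e : ℕ+ → X} (he : HasTsirelsonNorm θ S e) (A : Finset ℕ+) (a : ℕ+ → ℝ) :
    ‖∑ i ∈ A, a i • e i‖ = tnorm θ S (Finsupp.indicator A fun i _ => a i) := by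
  rw [← he, Finsupp.sum_indicator_index _ fun i _ => zero_smul ℝ (e i)]

lemma abs_le_norm_of_hasSum {e : ℕ+ → X} (he : HasTsirelsonNorm θ S e) (h1 : θ ≤ 1) {a : ℕ+ → ℝ}
    {x : X} (hx : HasSum (fun i => a i • e i) x) (i : ℕ+) : |a i| ≤ ‖x‖ := by
  refine ge_of_tendsto hx.norm ?_
  filter_upwards [eventually_ge_atTop {i}] with A hA
  rw [he.norm_sum_smul]
  simpa [Finsupp.indicator_apply, Finset.singleton_subset_iff.1 hA] using
    abs_apply_le_tnorm h1 S (Finsupp.indicator A fun i _ => a i) i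

/-- The coefficients of an expansion are bounded by the norm of its sum; this gives at once their
uniqueness and the continuity of the coordinate functionals. -/
lemma exists_unconditionalSchauderBasis {e : ℕ+ → X} (he : HasTsirelsonNorm θ S e) (h1 : θ ≤ 1)
    (hexp : ∀ x : X, ∃ a : ℕ+ → ℝ, HasSum (fun i => a i • e i) x) :
    ∃ b : UnconditionalSchauderBasis ℕ+ ℝ X, b.basis = e := by
  choose a ha using hexp
  have huniq {x : X} {c : ℕ+ → ℝ} (hc : HasSum (fun i => c i • e i) x) (i : ℕ+) :
      a x i = c i := by
    have h0 : HasSum (fun j => (a x j - c j) • e j) 0 := by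
      simpa only [sub_smul, sub_self] using (ha x).sub hc
    simpa [sub_eq_zero] using he.abs_le_norm_of_hasSum h1 h0 i
  have horth (i j : ℕ+) : a (e j) i = if i = j then 1 else 0 :=
    huniq (c := fun i => if i = j then 1 else 0) (by
      simpa using hasSum_single (f := fun i => (if i = j then (1 : ℝ) else 0) • e i) j
        fun i hi => by simp [hi]) i
  let coordLin (i : ℕ+) : X →ₗ[ℝ] ℝ :=
    { toFun := fun x => a x i
      map_add' := fun x y => huniq (c := a x + a y)
        (by simpa only [Pi.add_apply, add_smul] using (ha x).add (ha y)) i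
      map_smul' := fun t x => huniq (c := t • a x)
        (by simpa only [Pi.smul_apply, smul_eq_mul, mul_smul] using (ha x).const_smul t) i }
  refine ⟨
    { basis := e
      coord := fun i => (coordLin i).mkContinuous 1 fun x => by
        rw [one_mul]
        exact he.abs_le_norm_of_hasSum h1 (ha x) i
      ortho := fun i j => (horth i j).trans (by rcases eq_or_ne i j with rfl | h <;> simp [*])
      expansion := ha }, rfl⟩

variable {b : UnconditionalSchauderBasis ℕ+ ℝ X}

lemma norm_proj (hb : HasTsirelsonNorm θ S b) (A : Finset ℕ+) (x : X) :
    ‖b.proj A x‖ = tnorm θ S (Finsupp.indicator A fun i _ => b.coord i x) := by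
  rw [b.proj_apply, hb.norm_sum_smul]

end HasTsirelsonNorm

section Coord

variable (b : UnconditionalSchauderBasis ℕ+ ℝ X)

lemma tendsto_proj_atTop (x : X) : Tendsto (fun A => b.proj A x) atTop (𝓝 x) := by
  simpa using b.tendsto_proj x

lemma coord_basis (i j : ℕ+) : b.coord i (b j) = if i = j then 1 else 0 := by
  rcases eq_or_ne i j with rfl | h <;> simp [b.ortho, *]

lemma coord_sum_basis (i : ℕ+) (A : Finset ℕ+) :
    b.coord i (∑ a ∈ A, b a) = if i ∈ A then 1 else 0 := by
  simp [coord_basis]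

lemma coord_proj (i : ℕ+) (A : Finset ℕ+) (x : X) :
    b.coord i (b.proj A x) = if i ∈ A then b.coord i x else 0 := by
  simp [b.proj_apply, coord_basis]

variable {b}

lemma ext_coord {x y : X} (h : ∀ i, b.coord i x = b.coord i y) : x = y :=
  tendsto_nhds_unique (tendsto_proj_atTop b x) <| by
    simpa only [b.proj_apply, h] using tendsto_proj_atTop b y

lemma proj_Icc_add_one {p N : ℕ+} (hpN : p ≤ N) {x : X} (hx : ∀ j < p, b.coord j x = 0) :
    b.proj (Finset.Icc (p + 1) N) x = b.proj (Finset.Iic N) x - b.coord p x • b p := by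
  refine ext_coord (b := b) fun j => ?_
  rw [map_sub, map_smul, coord_proj, coord_proj, coord_basis, smul_eq_mul]
  simp only [Finset.mem_Icc, Finset.mem_Iic, PNat.add_one_le_iff]
  rcases lt_trichotomy j p with h | rfl | h
  · simp [hx j h, h.ne]
  · simp [hpN]
  · simp [h, h.ne']

end Coord

namespace HasTsirelsonNorm

variable {b : UnconditionalSchauderBasis ℕ+ ℝ X}

lemma abs_coord_le (hb : HasTsirelsonNorm θ S b) (h1 : θ ≤ 1) (i : ℕ+) (x : X) :
    |b.coord i x| ≤ ‖x‖ :=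
  hb.abs_le_norm_of_hasSum h1 (b.expansion x) i

lemma norm_le_norm (hb : HasTsirelsonNorm θ S b) (h0 : 0 ≤ θ) (h1 : θ ≤ 1) {x y : X}
    (h : ∀ i, |b.coord i y| ≤ |b.coord i x|) : ‖y‖ ≤ ‖x‖ := by
  refine le_of_tendsto_of_tendsto' (tendsto_proj_atTop b y).norm (tendsto_proj_atTop b x).norm
    fun A => ?_
  simp only [hb.norm_proj]
  refine tnorm_mono h0 h1 S fun i => ?_
  simp only [Finsupp.indicator_apply]
  split_ifs
  exacts [h i, le_rfl]

lemma norm_add_smul_le (hb : HasTsirelsonNorm θ S b) (h0 : 0 ≤ θ) (h1 : θ ≤ 1) {x : X} {i : ℕ+}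
    {t r : ℝ} (hr : 0 ≤ r) (ht : |b.coord i x + t| ≤ |b.coord i x| + r) :
    ‖x + t • b i‖ ≤ max |b.coord i x + t| (‖x‖ + θ * r) := by
  refine le_of_tendsto_of_tendsto (tendsto_proj_atTop b _).norm
    (tendsto_const_nhds.max ((tendsto_proj_atTop b x).norm.add_const _)) ?_
  filter_upwards [eventually_ge_atTop {i}] with A hA
  have hi : i ∈ A := Finset.singleton_subset_iff.1 hA
  have hadd : (Finsupp.indicator A fun j _ => b.coord j (x + t • b i)) =
      (Finsupp.indicator A fun j _ => b.coord j x) + Finsupp.single i t := by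
    ext j
    rcases eq_or_ne j i with rfl | hj
    · simp [Finsupp.indicator_apply, coord_basis, hi]
    · simp [Finsupp.indicator_apply, coord_basis, hj]
  simp only [hb.norm_proj, hadd]
  simpa [Finsupp.indicator_apply, hi] using
    tnorm_add_single_le h0 h1 S (x := Finsupp.indicator A fun j _ => b.coord j x) (i := i) hr
      (t := t) (by simpa [Finsupp.indicator_apply, hi] using ht)

lemma norm_le_max_coord_one (hb : HasTsirelsonNorm θ S b) (h0 : 0 ≤ θ) (h1 : θ ≤ 1 / 2)
    (hS : ∀ F ∈ S, 1 ∈ F → F.card ≤ 1) (x : X) :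
    ‖x‖ ≤ max |b.coord 1 x| ‖x - b.coord 1 x • b 1‖ := by
  refine le_of_tendsto_of_tendsto (tendsto_proj_atTop b _).norm
    (tendsto_const_nhds.max (tendsto_proj_atTop b _).norm) ?_
  filter_upwards [eventually_ge_atTop {1}] with A hA
  have hmem : 1 ∈ A := Finset.singleton_subset_iff.1 hA
  have herase : (Finsupp.indicator A fun j _ => b.coord j (x - b.coord 1 x • b 1)) =
      (Finsupp.indicator A fun j _ => b.coord j x).erase 1 := by
    ext j
    rcases eq_or_ne j 1 with rfl | hj
    · simp [Finsupp.indicator_apply, coord_basis]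
    · simp [Finsupp.indicator_apply, coord_basis, hj, Finsupp.erase_ne]
  simp only [hb.norm_proj, herase]
  simpa [Finsupp.indicator_apply, hmem] using
    tnorm_le_max_apply_one h0 h1 hS (Finsupp.indicator A fun j _ => b.coord j x)

lemma norm_sum_basis (hb : HasTsirelsonNorm θ S b) (A : Finset ℕ+) :
    ‖∑ a ∈ A, b a‖ = tnorm θ S (indVec A) := by
  simpa [indVec] using hb.norm_sum_smul A fun _ => 1

lemma mul_add_norm_proj_add_sum_le (hb : HasTsirelsonNorm θ S b) (h0 : 0 ≤ θ) (h1 : θ ≤ 1)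
    {p q N : ℕ+} (hpq : p < q) (hqN : q ≤ N) {A : Finset ℕ+} (hA : ∀ a ∈ A, N < a)
    (hS : insert p (insert q A) ∈ S) (x : X) :
    θ * (|b.coord p x| + ‖b.proj (Finset.Icc q N) x‖ + ∑ a ∈ A, |b.coord a x|) ≤ ‖x‖ := by
  refine ge_of_tendsto (tendsto_proj_atTop b x).norm ?_
  filter_upwards [eventually_ge_atTop (insert p (Finset.Icc q N ∪ A))] with B hB
  have hp : p ∈ B := hB (by simp)
  have hI : Finset.Icc q N ⊆ B := fun i hi => hB (by simp_all)
  have hAB : A ⊆ B := fun i hi => hB (by simp [hi])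
  have hproj : tsProj (Finset.Icc q N) (Finsupp.indicator B fun i _ => b.coord i x) =
      Finsupp.indicator (Finset.Icc q N) fun i _ => b.coord i x := by
    ext i
    by_cases hi : i ∈ Finset.Icc q N
    · simp [tsProj_apply, Finsupp.indicator_apply, hi, hI hi]
    · simp [tsProj_apply, Finsupp.indicator_apply, hi]
  have hsum : ∑ a ∈ A, |(Finsupp.indicator B fun i _ => b.coord i x) a| =
      ∑ a ∈ A, |b.coord a x| :=
    Finset.sum_congr rfl fun a ha => by simp [Finsupp.indicator_apply, hAB ha]
  have h := mul_add_tnorm_Icc_add_sum_le h0 h1 hpq hqN hA hS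
    (Finsupp.indicator B fun i _ => b.coord i x)
  rw [hproj, hsum] at h
  simpa only [← hb.norm_proj, Finsupp.indicator_apply, hp, dite_true] using h

end HasTsirelsonNorm

/-- The blocks `{N + 1, …, N + k}`: they have fixed size and belong to `S₁` once `N ≥ k`. -/
def farBlock (k N : ℕ+) : Finset ℕ+ := Finset.Ioc N (N + k)

lemma lt_of_mem_farBlock {k N a : ℕ+} (ha : a ∈ farBlock k N) : N < a := (Finset.mem_Ioc.1 ha).1

lemma card_farBlock (k N : ℕ+) : (farBlock k N).card = k := by simp [farBlock, PNat.card_Ioc]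

lemma farBlock_mem_schreier_one {k N : ℕ+} (h : k ≤ N) : farBlock k N ∈ Schreier 1 := by
  intro a ha
  rw [card_farBlock]
  exact_mod_cast h.trans (lt_of_mem_farBlock ha).le

lemma insert_insert_farBlock_mem_schreier {n : ℕ} (hn : 2 ≤ n) {k N p q : ℕ+} (hp : 2 ≤ p)
    (hpq : p < q) (hqN : q ≤ N) (hkN : k ≤ N) :
    insert p (insert q (farBlock k N)) ∈ Schreier n := by
  have hpair : {p, q} ∈ Schreier 1 := by
    intro a ha
    have h2a : 2 ≤ a := by grind
    exact Finset.card_le_two.trans (by exact_mod_cast h2a)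
  have hunion : {p, q} ∪ farBlock k N ∈ Schreier 2 :=
    union_mem_schreier_succ hpair (farBlock_mem_schreier_one hkN)
      (fun a ha c hc => by have := lt_of_mem_farBlock hc; grind)
      (fun a ha => by have := @lt_of_mem_farBlock k N a; grind)
  simpa [Finset.insert_union] using monotone_schreier hn hunion

lemma coord_one_sum_farBlock (b : UnconditionalSchauderBasis ℕ+ ℝ X) (k N : ℕ+) :
    b.coord 1 (∑ a ∈ farBlock k N, b a) = 0 := by
  rw [coord_sum_basis, if_neg fun h => not_lt_one (lt_of_mem_farBlock h)]

/-- The unit vector basis of a realization of `T[θ, S_n]` with `θ⁻¹ = k`, with the restrictions on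
`k` and `n` under which sphere isometries are studied. -/
structure IsTsirelsonBasis (θ : ℝ) (k : ℕ+) (n : ℕ) (b : UnconditionalSchauderBasis ℕ+ ℝ X) :
    Prop where
  two_le_k : 2 ≤ k
  mul_eq_one : θ * k = 1
  two_le_n : 2 ≤ n
  hasTsirelsonNorm : HasTsirelsonNorm θ (Schreier n) b

namespace IsTsirelsonBasis

variable {k : ℕ+} {n : ℕ} {b : UnconditionalSchauderBasis ℕ+ ℝ X}

section Norm

variable (hb : IsTsirelsonBasis θ k n b)
include hb

lemma pos : 0 < θ :=
  pos_of_mul_pos_left (hb.mul_eq_one ▸ one_pos) k.val.cast_nonneg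

lemma le_half : θ ≤ 1 / 2 := by
  have hk : (2 : ℝ) ≤ k := by exact_mod_cast hb.two_le_k
  nlinarith [hb.mul_eq_one, hb.pos]

lemma le_one : θ ≤ 1 := hb.le_half.trans (by norm_num)

lemma abs_coord_le (i : ℕ+) (x : X) : |b.coord i x| ≤ ‖x‖ :=
  hb.hasTsirelsonNorm.abs_coord_le hb.le_one i x

lemma abs_coord_le_norm_sub_proj_Iic {a N : ℕ+} (ha : N < a) (x : X) :
    |b.coord a x| ≤ ‖x - b.proj (Finset.Iic N) x‖ := by
  have h := hb.abs_coord_le a (x - b.proj (Finset.Iic N) x)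
  rwa [map_sub, coord_proj, if_neg (by simpa using ha), sub_zero] at h

lemma norm_le_norm {x y : X} (h : ∀ i, |b.coord i y| ≤ |b.coord i x|) : ‖y‖ ≤ ‖x‖ :=
  hb.hasTsirelsonNorm.norm_le_norm hb.pos.le hb.le_one h

lemma norm_sub_coord_smul_le (i : ℕ+) (x : X) : ‖x - b.coord i x • b i‖ ≤ ‖x‖ :=
  hb.norm_le_norm fun j => by
    rcases eq_or_ne j i with rfl | hj
    · simp [coord_basis]
    · simp [coord_basis, hj]

lemma norm_add_smul_le {x : X} {i : ℕ+} {t r : ℝ} (hr : 0 ≤ r)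
    (ht : |b.coord i x + t| ≤ |b.coord i x| + r) :
    ‖x + t • b i‖ ≤ max |b.coord i x + t| (‖x‖ + θ * r) :=
  hb.hasTsirelsonNorm.norm_add_smul_le hb.pos.le hb.le_one hr ht

lemma norm_add_smul_le_max (x : X) (i : ℕ+) (t : ℝ) :
    ‖x + t • b i‖ ≤ max |b.coord i x + t| (‖x‖ + θ * |t|) :=
  hb.norm_add_smul_le (abs_nonneg t) (abs_add_le _ t)

lemma norm_le_max_coord_one (x : X) :
    ‖x‖ ≤ max |b.coord 1 x| ‖x - b.coord 1 x • b 1‖ :=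
  hb.hasTsirelsonNorm.norm_le_max_coord_one hb.pos.le hb.le_half
    (fun _ => card_le_one_of_one_mem_schreier) x

lemma norm_add_smul_one_le (x : X) (c : ℝ) :
    ‖x + c • b 1‖ ≤ max |b.coord 1 x + c| ‖x - b.coord 1 x • b 1‖ := by
  have h := hb.norm_le_max_coord_one (x + c • b 1)
  simpa [coord_basis, add_smul, add_sub_add_right_eq_sub] using h

lemma norm_sum_eq_one {A : Finset ℕ+} (hA : A.Nonempty) (hk : A.card ≤ k) :
    ‖∑ a ∈ A, b a‖ = 1 := by
  refine le_antisymm ?_ ?_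
  · rw [hb.hasTsirelsonNorm.norm_sum_basis]
    refine (tnorm_indVec_le hb.pos.le hb.le_one _ A).trans (max_le le_rfl ?_)
    rw [← hb.mul_eq_one]
    exact mul_le_mul_of_nonneg_left (by exact_mod_cast hk) hb.pos.le
  · obtain ⟨a, ha⟩ := hA
    have h := hb.abs_coord_le a (∑ a ∈ A, b a)
    rwa [coord_sum_basis, if_pos ha, abs_one] at h

lemma norm_sum_farBlock (N : ℕ+) : ‖∑ a ∈ farBlock k N, b a‖ = 1 :=
  hb.norm_sum_eq_one (Finset.card_pos.1 (card_farBlock k N ▸ k.pos)) (card_farBlock k N).le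

lemma norm_basis (i : ℕ+) : ‖b i‖ = 1 := by
  simpa using hb.norm_sum_eq_one (Finset.singleton_nonempty i) k.pos

lemma norm_smul_basis (c : ℝ) (i : ℕ+) : ‖c • b i‖ = |c| := by
  rw [norm_smul, hb.norm_basis, mul_one, Real.norm_eq_abs]

lemma norm_smul_add_smul_le_one {i j : ℕ+} (hij : i ≠ j) {c d : ℝ} (hc : |c| ≤ 1) (hd : |d| ≤ 1) :
    ‖c • b i + d • b j‖ ≤ 1 := by
  have hcard : ({i, j} : Finset ℕ+).card ≤ k :=
    (Finset.card_pair hij).trans_le (by exact_mod_cast hb.two_le_k)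
  rw [← hb.norm_sum_eq_one (Finset.insert_nonempty i {j}) hcard]
  refine hb.norm_le_norm fun l => ?_
  rw [coord_sum_basis, map_add, map_smul, map_smul, coord_basis, coord_basis]
  rcases eq_or_ne l i with rfl | hi
  · simpa [hij] using hc
  · rcases eq_or_ne l j with rfl | hj
    · simpa [hi] using hd
    · simp [hi, hj]

lemma mul_le_norm_sub_sum_farBlock {x : X} {p N : ℕ+} (hp : 2 ≤ p)
    (hx : ∀ j < p, b.coord j x = 0) (hpN : p < N) (hkN : k ≤ N) :
    θ * (|b.coord p x| + ‖b.proj (Finset.Iic N) x - b.coord p x • b p‖ +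
      k * (1 - ‖x - b.proj (Finset.Iic N) x‖)) ≤ ‖x - ∑ a ∈ farBlock k N, b a‖ := by
  have hqN : p + 1 ≤ N := PNat.add_one_le_iff.2 hpN
  have hle : ∀ j ≤ N, b.coord j (x - ∑ a ∈ farBlock k N, b a) = b.coord j x := fun j hj => by
    rw [map_sub, coord_sum_basis, if_neg fun h => hj.not_gt (lt_of_mem_farBlock h), sub_zero]
  have hmid : b.proj (Finset.Icc (p + 1) N) (x - ∑ a ∈ farBlock k N, b a) =
      b.proj (Finset.Icc (p + 1) N) x := by
    simp only [b.proj_apply]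
    exact Finset.sum_congr rfl fun j hj => by rw [hle j (Finset.mem_Icc.1 hj).2]
  have htail : ∀ a ∈ farBlock k N, 1 - ‖x - b.proj (Finset.Iic N) x‖ ≤
      |b.coord a (x - ∑ a ∈ farBlock k N, b a)| := fun a ha => by
    rw [map_sub, coord_sum_basis, if_pos ha, abs_sub_comm]
    have hle := hb.abs_coord_le_norm_sub_proj_Iic (lt_of_mem_farBlock ha) x
    refine (sub_le_sub_left hle 1).trans ?_
    simpa using abs_sub_abs_le_abs_sub 1 (b.coord a x)
  have hsum := Finset.card_nsmul_le_sum _ _ _ htail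
  rw [card_farBlock, nsmul_eq_mul] at hsum
  refine (mul_le_mul_of_nonneg_left ?_ hb.pos.le).trans
    (hb.hasTsirelsonNorm.mul_add_norm_proj_add_sum_le hb.pos.le hb.le_one (PNat.lt_add_right p 1)
      hqN (fun a ha => lt_of_mem_farBlock ha)
      (insert_insert_farBlock_mem_schreier hb.two_le_n hp (PNat.lt_add_right p 1) hqN hkN) _)
  rw [hle p hpN.le, hmid, proj_Icc_add_one hpN.le hx]
  gcongr

lemma eventually_lt_norm_sub_sum_farBlock {x : X} {p : ℕ+} (hp : 2 ≤ p)
    (hx : ∀ j < p, b.coord j x = 0) {c : ℝ}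
    (hc : c < 1 + θ * (|b.coord p x| + ‖x - b.coord p x • b p‖)) :
    ∀ᶠ N in atTop, c < ‖x - ∑ a ∈ farBlock k N, b a‖ := by
  have hproj : Tendsto (fun N : ℕ+ => b.proj (Finset.Iic N) x) atTop (𝓝 x) :=
    (tendsto_proj_atTop b x).comp tendsto_finset_Iic_atTop_atTop
  have hlim : Tendsto (fun N : ℕ+ => θ * (|b.coord p x| +
      ‖b.proj (Finset.Iic N) x - b.coord p x • b p‖ + k * (1 - ‖x - b.proj (Finset.Iic N) x‖)))
      atTop (𝓝 (1 + θ * (|b.coord p x| + ‖x - b.coord p x • b p‖))) := by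
    convert (((hproj.sub_const _).norm.const_add _).add
      (((hproj.const_sub x).norm.const_sub 1).const_mul (k : ℝ))).const_mul θ using 2
    rw [sub_self, norm_zero]
    linear_combination -hb.mul_eq_one
  filter_upwards [hlim.eventually_const_lt hc, eventually_gt_atTop p, eventually_ge_atTop k]
    with N hcN hpN hkN
  exact hcN.trans_le (hb.mul_le_norm_sub_sum_farBlock hp hx hpN hkN)

lemma eventually_lt_norm_sub_sum_farBlock_of_coord_one_eq_zero {x : X} (hx : b.coord 1 x = 0)
    {c : ℝ} (hc : c < 1 + θ * ‖x‖) : ∀ᶠ N in atTop, c < ‖x - ∑ a ∈ farBlock k N, b a‖ := by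
  refine hb.eventually_lt_norm_sub_sum_farBlock le_rfl
    (fun j hj => by rwa [PNat.lt_add_one_iff.1 hj |>.antisymm one_le]) (hc.trans_le ?_)
  have h := norm_add_le (b.coord 2 x • b 2) (x - b.coord 2 x • b 2)
  rw [add_sub_cancel, hb.norm_smul_basis] at h
  exact add_le_add_right (mul_le_mul_of_nonneg_left h hb.pos.le) 1

end Norm

/-! ### Sphere isometries -/

section FirstBasisVector

variable (hb : IsTsirelsonBasis θ k n b)
include hb

lemma norm_sub_basis_one_le_or_norm_add_basis_one_le {y : X} (hy : ‖y‖ = 1) :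
    ‖y - b 1‖ ≤ 1 ∨ ‖y + b 1‖ ≤ 1 := by
  have hcoord := abs_le.1 ((hb.abs_coord_le 1 y).trans_eq hy)
  have hrest : ‖y - b.coord 1 y • b 1‖ ≤ 1 := (hb.norm_sub_coord_smul_le 1 y).trans_eq hy
  rcases le_total 0 (b.coord 1 y) with h | h
  · have hsub := hb.norm_add_smul_one_le y (-1)
    rw [neg_one_smul, ← sub_eq_add_neg] at hsub
    exact Or.inl (hsub.trans (max_le (abs_le.2 ⟨by linarith, by linarith⟩) hrest))
  · have hadd := hb.norm_add_smul_one_le y 1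
    rw [one_smul] at hadd
    exact Or.inr (hadd.trans (max_le (abs_le.2 ⟨by linarith, by linarith⟩) hrest))

lemma norm_add_smul_basis_one {x : X} (hx : b.coord 1 x = 0) (c : ℝ) :
    ‖x + c • b 1‖ = max |c| ‖x‖ := by
  have hcoord : b.coord 1 (x + c • b 1) = c := by simp [hx, coord_basis]
  refine le_antisymm ?_ (max_le ?_ ?_)
  · simpa [hx] using hb.norm_add_smul_one_le x c
  · simpa only [hcoord] using hb.abs_coord_le 1 (x + c • b 1)
  · simpa only [hcoord, add_sub_cancel_right] using hb.norm_sub_coord_smul_le 1 (x + c • b 1)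

lemma norm_smul_one_add_sum_farBlock {c : ℝ} (hc : |c| ≤ 1) (N : ℕ+) :
    ‖c • b 1 + ∑ a ∈ farBlock k N, b a‖ = 1 := by
  rw [add_comm, hb.norm_add_smul_basis_one (coord_one_sum_farBlock b k N), hb.norm_sum_farBlock,
    max_eq_right hc]

lemma eventually_one_lt_norm_smul_one_add_sum_sub {g : X} (hg : g ≠ b.coord 1 g • b 1) :
    ∀ᶠ N in atTop, ∀ c : ℝ, 1 < ‖c • b 1 + ∑ a ∈ farBlock k N, b a - g‖ := by
  have hpos : 0 < θ * ‖g - b.coord 1 g • b 1‖ :=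
    mul_pos hb.pos (norm_pos_iff.2 (sub_ne_zero.2 hg))
  have hcoord : b.coord 1 (g - b.coord 1 g • b 1) = 0 := by simp [coord_basis]
  filter_upwards [hb.eventually_lt_norm_sub_sum_farBlock_of_coord_one_eq_zero hcoord
    (lt_add_of_pos_right 1 hpos)] with N hN c
  refine hN.trans_le (hb.norm_le_norm fun l => ?_)
  simp only [map_sub, map_add, map_smul, coord_basis, smul_eq_mul]
  rcases eq_or_ne l 1 with rfl | hl
  · simp only [coord_one_sum_farBlock, if_true, mul_one, sub_self, abs_zero]
    positivity
  · simp only [if_neg hl, mul_zero, sub_zero, zero_add]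
    rw [abs_sub_comm]

lemma eq_neg_of_forall_norm_sub_le {g h : X} (hg : ‖g‖ = 1) (hh : ‖h‖ = 1) (hgh : ‖g - h‖ = 2)
    (hcover : ∀ y : X, ‖y‖ = 1 → ‖y - g‖ ≤ 1 ∨ ‖y - h‖ ≤ 1) (hg1 : g = b.coord 1 g • b 1) :
    h = -g := by
  have hgc : |b.coord 1 g| = 1 := by rw [← hb.norm_smul_basis, ← hg1, hg]
  have hhc : |b.coord 1 h| ≤ 1 := (hb.abs_coord_le 1 h).trans_eq hh
  have hdist : 2 ≤ |b.coord 1 h - b.coord 1 g| := by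
    have hle := hb.norm_add_smul_one_le h (-b.coord 1 g)
    rw [neg_smul, ← hg1, ← sub_eq_add_neg, ← sub_eq_add_neg, norm_sub_rev, hgh] at hle
    refine (le_max_iff.1 hle).resolve_right fun hle' => ?_
    linarith [hb.norm_sub_coord_smul_le 1 h]
  have hcoord : b.coord 1 h = -b.coord 1 g := eq_neg_of_two_le_abs_sub hhc hgc.le hdist
  by_contra hne
  have hh1 : h ≠ b.coord 1 h • b 1 := fun hh1 => hne (by rw [hh1, hcoord, neg_smul, ← hg1])
  obtain ⟨N, hN⟩ := (hb.eventually_one_lt_norm_smul_one_add_sum_sub hh1).exists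
  rcases hcover _ (hb.norm_smul_one_add_sum_farBlock hhc N) with hy | hy
  · have hle := (hb.abs_coord_le 1 _).trans hy
    rw [map_sub, map_add, map_smul, coord_basis, if_pos rfl, coord_one_sum_farBlock,
      smul_eq_mul, mul_one, add_zero] at hle
    linarith
  · exact (hN (b.coord 1 h)).not_ge hy

/-- A vector of a far block sees every `g` outside the span of `e_1` at distance greater than `1`,
so one of `g` and `h` is in that span. -/
lemma exists_eq_smul_basis_one_of_forall_norm_sub_le {g h : X} (hg : ‖g‖ = 1) (hh : ‖h‖ = 1)
    (hgh : ‖g - h‖ = 2) (hcover : ∀ y : X, ‖y‖ = 1 → ‖y - g‖ ≤ 1 ∨ ‖y - h‖ ≤ 1) :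
    ∃ c : ℝ, |c| = 1 ∧ g = c • b 1 ∧ h = -(c • b 1) := by
  have hspan : g = b.coord 1 g • b 1 ∨ h = b.coord 1 h • b 1 := by
    by_contra! ⟨hg1, hh1⟩
    obtain ⟨N, hgN, hhN⟩ := ((hb.eventually_one_lt_norm_smul_one_add_sum_sub hg1).and
      (hb.eventually_one_lt_norm_smul_one_add_sum_sub hh1)).exists
    rcases hcover _ (hb.norm_smul_one_add_sum_farBlock (c := 0) (by simp) N) with hy | hy
    exacts [(hgN 0).not_ge hy, (hhN 0).not_ge hy]
  have hneg : h = -g := by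
    rcases hspan with hg1 | hh1
    · exact hb.eq_neg_of_forall_norm_sub_le hg hh hgh hcover hg1
    · rw [hb.eq_neg_of_forall_norm_sub_le hh hg (norm_sub_rev g h ▸ hgh)
        (fun y hy => (hcover y hy).symm) hh1, neg_neg]
  have hg1 : g = b.coord 1 g • b 1 := by
    rcases hspan with hg1 | hh1
    · exact hg1
    · rwa [hneg, map_neg, neg_smul, neg_inj] at hh1
  exact ⟨b.coord 1 g, by rw [← hb.norm_smul_basis, ← hg1, hg], hg1, by rw [← hg1, hneg]⟩

end FirstBasisVector

section MapUnit

variable (hb : IsTsirelsonBasis θ k n b)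

/-- The basis vector `b i` as a point of the unit sphere. -/
def unit (i : ℕ+) : Metric.sphere (0 : X) 1 := ⟨b i, mem_sphere_zero_iff_norm.2 (hb.norm_basis i)⟩

lemma coe_unit (i : ℕ+) : (hb.unit i : X) = b i := rfl

lemma coe_neg_unit (i : ℕ+) : ((-hb.unit i : Metric.sphere (0 : X) 1) : X) = -b i := rfl

variable (U : Metric.sphere (0 : X) 1 ≃ᵢ Metric.sphere (0 : X) 1)
include hb

lemma exists_map_unit_one : ∃ c : ℝ, |c| = 1 ∧ (U (hb.unit 1) : X) = c • b 1 ∧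
    (U (-hb.unit 1) : X) = -(c • b 1) := by
  refine hb.exists_eq_smul_basis_one_of_forall_norm_sub_le (norm_eq_of_mem_sphere _)
    (norm_eq_of_mem_sphere _) (norm_coe_map_sub_map_neg_self U _) fun y hy => ?_
  obtain ⟨x, hx⟩ := U.surjective ⟨y, mem_sphere_zero_iff_norm.2 hy⟩
  obtain rfl : (U x : X) = y := congrArg Subtype.val hx
  rw [norm_coe_map_sub, norm_coe_map_sub, coe_neg_unit, coe_unit, sub_neg_eq_add]
  exact hb.norm_sub_basis_one_le_or_norm_add_basis_one_le (norm_eq_of_mem_sphere x)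

lemma coord_one_map_eq_zero {i : ℕ+} (hi : i ≠ 1) {τ : ℝ} (hτ : |τ| = 1)
    {x : Metric.sphere (0 : X) 1} (hx : (x : X) = τ • b i) : b.coord 1 (U x) = 0 := by
  obtain ⟨c, hc, hpos, hneg⟩ := hb.exists_map_unit_one U
  have hsub : |b.coord 1 (U x) - c| ≤ 1 := by
    have h := hb.abs_coord_le 1 ((U x : X) - U (hb.unit 1))
    rw [norm_coe_map_sub, hpos, hx, coe_unit, sub_eq_add_neg (τ • b i), ← neg_one_smul ℝ (b 1),
      map_sub, map_smul, coord_basis, if_pos rfl, smul_eq_mul, mul_one] at h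
    exact h.trans (hb.norm_smul_add_smul_le_one hi hτ.le (by simp))
  have hadd : |b.coord 1 (U x) + c| ≤ 1 := by
    have h := hb.abs_coord_le 1 ((U x : X) - U (-hb.unit 1))
    rw [norm_coe_map_sub, hneg, hx, coe_neg_unit, sub_neg_eq_add, sub_neg_eq_add,
      ← one_smul ℝ (b 1), ← mul_smul, mul_one, map_add, map_smul, coord_basis, if_pos rfl,
      smul_eq_mul, mul_one] at h
    exact h.trans (hb.norm_smul_add_smul_le_one hi hτ.le (by simp))
  rw [abs_le] at hsub hadd
  rcases eq_or_eq_neg_of_abs_eq hc with rfl | rfl <;> linarith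

omit U in
lemma norm_add_smul_lt_of_lt_norm_sub_smul {v : X} (hv : ‖v‖ = 1) {i : ℕ+} {τ : ℝ} (hτ : |τ| = 1)
    (hlt : 1 + θ < ‖v - τ • b i‖) : ‖v + τ • b i‖ < 1 + θ - θ * θ := by
  have h0 := hb.pos
  have hhalf := hb.le_half
  have hv1 : |b.coord i v| ≤ 1 := (hb.abs_coord_le i v).trans_eq hv
  have hcoord : 1 + θ < |b.coord i v - τ| := by
    have h := hb.norm_add_smul_le_max v i (-τ)
    rw [neg_smul, ← sub_eq_add_neg, ← sub_eq_add_neg, abs_neg, hτ, hv, mul_one] at h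
    exact hlt.trans_le ((le_max_iff.1 h).resolve_right hlt.not_ge)
  have habs := abs_sub_and_abs_add_of_one_lt_abs_sub hv1 hτ (by linarith)
  rw [habs.1] at hcoord
  have hle := hb.norm_add_smul_le (x := v) (i := i) (t := τ)
    (le_max_left 0 (1 - 2 * |b.coord i v|))
    (by rw [habs.2]; linarith [le_max_right 0 (1 - 2 * |b.coord i v|)])
  have hr : max 0 (1 - 2 * |b.coord i v|) < 1 - θ := max_lt (by linarith) (by linarith)
  rw [hv, habs.2] at hle
  refine hle.trans_lt (max_lt (by nlinarith) ?_)
  nlinarith [mul_lt_mul_of_pos_left hr h0]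

lemma norm_map_neg_sub_lt {i : ℕ+} {τ : ℝ} (hτ : |τ| = 1) {x : Metric.sphere (0 : X) 1}
    (hx : (x : X) = τ • b i) {y : X} (hy : ‖y‖ = 1) (hlt : 1 + θ < ‖(U x : X) - y‖) :
    ‖(U (-x) : X) - y‖ < 1 + θ - θ * θ := by
  obtain ⟨v, hv⟩ := U.surjective ⟨y, mem_sphere_zero_iff_norm.2 hy⟩
  obtain rfl : (U v : X) = y := congrArg Subtype.val hv
  rw [norm_coe_map_sub, norm_sub_rev, hx] at hlt
  rw [norm_coe_map_sub, norm_sub_rev, coe_neg_sphere, sub_neg_eq_add, hx]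
  exact hb.norm_add_smul_lt_of_lt_norm_sub_smul (norm_eq_of_mem_sphere v) hτ hlt

omit U in
lemma eq_coord_smul_of_abs_coord_add_norm_le {g : X} (hg : ‖g‖ = 1) {p : ℕ+}
    (hp : b.coord p g ≠ 0) (hle : |b.coord p g| + ‖g - b.coord p g • b p‖ ≤ 1) :
    g = b.coord p g • b p := by
  have hpos : 0 < |b.coord p g| := abs_pos.2 hp
  have h := hb.norm_add_smul_le_max (g - b.coord p g • b p) p (b.coord p g)
  rw [sub_add_cancel, hg, map_sub, map_smul, coord_basis, if_pos rfl, smul_eq_mul, mul_one,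
    sub_self, zero_add] at h
  have h1 : 1 ≤ |b.coord p g| := (le_max_iff.1 h).resolve_right fun h => by
    nlinarith [hb.le_half]
  exact sub_eq_zero.1 (norm_le_zero_iff.1 (by linarith))

omit hb U in
lemma exists_coord_ne_zero_forall_lt {x : X} (hx : x ≠ 0) :
    ∃ p, b.coord p x ≠ 0 ∧ ∀ j < p, b.coord j x = 0 := by
  have hex : {p | b.coord p x ≠ 0}.Nonempty := by
    by_contra! h
    exact hx (ext_coord (b := b) fun i => by simpa using Set.eq_empty_iff_forall_notMem.1 h i)
  obtain ⟨p, hp, hmin⟩ := WellFounded.has_min wellFounded_lt _ hex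
  exact ⟨p, hp, fun j hj => not_not.1 fun h => hmin j h hj⟩

lemma exists_map_eq_smul_basis {i : ℕ+} {τ : ℝ} (hτ : |τ| = 1) {x : Metric.sphere (0 : X) 1}
    (hx : (x : X) = τ • b i) (h1 : b.coord 1 (U x) = 0) (h1' : b.coord 1 (U (-x)) = 0) :
    ∃ (p : ℕ+) (c : ℝ), |c| = 1 ∧ (U x : X) = c • b p := by
  have hU : ‖(U x : X)‖ = 1 := norm_eq_of_mem_sphere _
  obtain ⟨p, hp, hmin⟩ := exists_coord_ne_zero_forall_lt (b := b) (ne_zero_of_norm_ne_zero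
    (hU.trans_ne one_ne_zero))
  have hp2 : 2 ≤ p := Order.add_one_le_of_lt (one_le.lt_of_ne (by rintro rfl; exact hp h1))
  have hle : |b.coord p (U x)| + ‖(U x : X) - b.coord p (U x) • b p‖ ≤ 1 := by
    by_contra! hlt
    obtain ⟨N, hN, hN'⟩ := ((hb.eventually_lt_norm_sub_sum_farBlock hp2 hmin (c := 1 + θ)
      (add_lt_add_right (lt_mul_of_one_lt_right hb.pos hlt) 1)).and
      (hb.eventually_lt_norm_sub_sum_farBlock_of_coord_one_eq_zero h1' (c := 1 + θ - θ * θ) (by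
        rw [norm_eq_of_mem_sphere, mul_one]
        exact sub_lt_self _ (mul_pos hb.pos hb.pos)))).exists
    exact (hb.norm_map_neg_sub_lt U hτ hx (hb.norm_sum_farBlock N) hN).not_gt hN'
  have heq := hb.eq_coord_smul_of_abs_coord_add_norm_le hU hp hle
  exact ⟨p, b.coord p (U x), by rw [← hb.norm_smul_basis, ← heq, hU], heq⟩

lemma exists_map_unit (i : ℕ+) : ∃ (p : ℕ+) (c : ℝ), |c| = 1 ∧ (U (hb.unit i) : X) = c • b p ∧
    (U (-hb.unit i) : X) = -(c • b p) ∧ (i = 1 → p = 1) := by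
  rcases eq_or_ne i 1 with rfl | hi
  · obtain ⟨c, hc, hpos, hneg⟩ := hb.exists_map_unit_one U
    exact ⟨1, c, hc, hpos, hneg, fun _ => rfl⟩
  have hunit : (hb.unit i : X) = (1 : ℝ) • b i := (one_smul ℝ (b i)).symm
  have hneg_unit : ((-hb.unit i : Metric.sphere (0 : X) 1) : X) = (-1 : ℝ) • b i := by
    rw [coe_neg_unit, neg_one_smul]
  have h1 := hb.coord_one_map_eq_zero U hi (by simp) hunit
  have h1' := hb.coord_one_map_eq_zero U hi (by simp) hneg_unit
  obtain ⟨p, c, hc, hp⟩ := hb.exists_map_eq_smul_basis U (by simp) hunit h1 h1'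
  obtain ⟨q, d, hd, hq⟩ := hb.exists_map_eq_smul_basis U (by simp) hneg_unit h1' (by rwa [neg_neg])
  have hdist := norm_coe_map_sub_map_neg_self U (hb.unit i)
  rw [hp, hq] at hdist
  obtain rfl : p = q := by
    by_contra hpq
    have h := hb.norm_smul_add_smul_le_one hpq hc.le ((abs_neg d).trans hd).le
    rw [neg_smul, ← sub_eq_add_neg, hdist] at h
    norm_num at h
  rw [← sub_smul, hb.norm_smul_basis] at hdist
  have hcd : c = -d := eq_neg_of_two_le_abs_sub hc.le hd.le hdist.ge
  exact ⟨p, c, hc, hp, by rw [hq, hcd, neg_smul, neg_neg], fun h => absurd h hi⟩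

end MapUnit

/-- The isometry `U` of the unit sphere acts on the basis vectors as the signed permutation
`± b i ↦ ± c i • b (π i)`, which fixes the span of `b 1`. -/
structure ActsAsSignedPermutation (hb : IsTsirelsonBasis θ k n b)
    (U : Metric.sphere (0 : X) 1 ≃ᵢ Metric.sphere (0 : X) 1) (π : ℕ+ → ℕ+) (c : ℕ+ → ℝ) :
    Prop where
  abs_eq_one : ∀ i, |c i| = 1
  map_unit : ∀ i, (U (hb.unit i) : X) = c i • b (π i)
  map_neg_unit : ∀ i, (U (-hb.unit i) : X) = -(c i • b (π i))
  map_one : π 1 = 1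

lemma exists_actsAsSignedPermutation (hb : IsTsirelsonBasis θ k n b)
    (U : Metric.sphere (0 : X) 1 ≃ᵢ Metric.sphere (0 : X) 1) :
    ∃ π c, ActsAsSignedPermutation hb U π c := by
  choose π c hc hpos hneg h1 using hb.exists_map_unit U
  exact ⟨π, c, hc, hpos, hneg, h1 1 rfl⟩

namespace ActsAsSignedPermutation

variable {hb : IsTsirelsonBasis θ k n b} {U : Metric.sphere (0 : X) 1 ≃ᵢ Metric.sphere (0 : X) 1}
  {π : ℕ+ → ℕ+} {c : ℕ+ → ℝ} (hU : ActsAsSignedPermutation hb U π c)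
include hU

lemma injective : Function.Injective π := by
  intro i j hij
  have hunit : hb.unit i = hb.unit j ∨ hb.unit i = -hb.unit j := by
    refine (abs_eq_abs.1 ((hU.abs_eq_one i).trans (hU.abs_eq_one j).symm)).imp
      (fun h => U.injective (Subtype.ext ?_)) (fun h => U.injective (Subtype.ext ?_))
    · rw [hU.map_unit, hU.map_unit, hij, h]
    · rw [hU.map_unit, hU.map_neg_unit, hij, h, neg_smul]
  by_contra hne
  rcases hunit with h | h <;>
    · have hcoord := congrArg (fun x : Metric.sphere (0 : X) 1 => b.coord i x) h
      simp [coe_unit, coord_basis, hne] at hcoord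

lemma norm_sub_basis (y : Metric.sphere (0 : X) 1) (j : ℕ+) :
    ‖(U y : X) - c j • b (π j)‖ = ‖(y : X) - b j‖ := by
  rw [← hU.map_unit, norm_coe_map_sub, coe_unit]

lemma norm_add_basis (y : Metric.sphere (0 : X) 1) (j : ℕ+) :
    ‖(U y : X) + c j • b (π j)‖ = ‖(y : X) + b j‖ := by
  rw [← sub_neg_eq_add, ← hU.map_neg_unit, norm_coe_map_sub, coe_neg_unit, sub_neg_eq_add]

lemma coord_one_map {y : Metric.sphere (0 : X) 1} (hy : b.coord 1 y = 1) :
    b.coord 1 (U y) = c 1 := by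
  have hUy : ‖(U y : X)‖ = 1 := norm_eq_of_mem_sphere _
  have hle : 2 ≤ |b.coord 1 (U y) + c 1| := by
    have h := (hb.abs_coord_le 1 ((y : X) + b 1)).trans_eq (hU.norm_add_basis y 1).symm
    rw [map_add, hy, coord_basis, if_pos rfl, one_add_one_eq_two, abs_two, hU.map_one] at h
    refine (le_max_iff.1 (h.trans (hb.norm_add_smul_one_le _ _))).resolve_right fun h => ?_
    linarith [hb.norm_sub_coord_smul_le 1 (U y : X)]
  rw [eq_neg_of_two_le_abs_sub (t := -c 1) ((hb.abs_coord_le 1 _).trans_eq hUy)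
    (by rw [abs_neg, hU.abs_eq_one]) (by rwa [sub_neg_eq_add]), neg_neg]

lemma norm_map_sub_coord_one_smul {y : Metric.sphere (0 : X) 1} (hy : b.coord 1 y = 1) :
    ‖(U y : X) - b.coord 1 (U y) • b 1‖ = ‖(y : X) - b 1‖ := by
  rw [hU.coord_one_map hy, ← hU.norm_sub_basis, hU.map_one]

lemma coord_le_abs_coord_map {y : Metric.sphere (0 : X) 1} (hy : b.coord 1 y = 1)
    (hsmall : ‖(y : X) - b 1‖ < 1 - θ) {j : ℕ+} (hj : j ≠ 1) :
    b.coord j y ≤ |b.coord (π j) (U y)| := by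
  rcases le_or_gt (b.coord j y) 0 with hneg | hpos
  · exact hneg.trans (abs_nonneg _)
  have hπj : 1 ≠ π j := fun h => hj (hU.injective (h.symm.trans hU.map_one.symm))
  have hlower : 1 + b.coord j y ≤ ‖(U y : X) + c j • b (π j)‖ := by
    have h := hb.abs_coord_le j ((y : X) + b j)
    rw [map_add, coord_basis, if_pos rfl, add_comm, abs_of_pos (by linarith)] at h
    exact h.trans_eq (hU.norm_add_basis y j).symm
  have hcoord : |b.coord 1 ((U y : X) + c j • b (π j))| = 1 := by
    rw [map_add, map_smul, coord_basis, if_neg hπj, smul_zero, add_zero, hU.coord_one_map hy,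
      hU.abs_eq_one]
  have hrest : (U y : X) + c j • b (π j) - b.coord 1 ((U y : X) + c j • b (π j)) • b 1 =
      ((U y : X) - b.coord 1 (U y) • b 1) + c j • b (π j) := by
    rw [map_add, map_smul, coord_basis, if_neg hπj, smul_zero, add_zero]
    abel
  have hmax := hlower.trans (hb.norm_le_max_coord_one _)
  rw [hcoord, hrest] at hmax
  have hupper := hb.norm_add_smul_le_max ((U y : X) - b.coord 1 (U y) • b 1) (π j) (c j)
  rw [hU.norm_map_sub_coord_one_smul hy, hU.abs_eq_one, mul_one, map_sub, map_smul, coord_basis,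
    if_neg hπj.symm, smul_zero, sub_zero] at hupper
  have habs := abs_add_le (b.coord (π j) (U y)) (c j)
  rw [hU.abs_eq_one] at habs
  have := (le_max_iff.1 hmax).resolve_left (by linarith)
  have := (le_max_iff.1 (this.trans hupper)).resolve_right (by linarith)
  linarith

/-- Isometry is tested on `y = t • ∑ a ∈ G, b a + b 1` with `t` small. -/
lemma norm_sum_image_le {G : Finset ℕ+} (hG : 1 ∉ G) :
    ‖∑ a ∈ G.image π, b a‖ ≤ ‖∑ a ∈ G, b a‖ := by
  obtain ⟨t, ht, htG⟩ : ∃ t > 0, t * ‖∑ a ∈ G, b a‖ < 1 - θ := by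
    have hθ : 0 < 1 - θ := by linarith [hb.le_half]
    refine ⟨(1 - θ) / (‖∑ a ∈ G, b a‖ + 1), by positivity, ?_⟩
    rw [div_mul_eq_mul_div, div_lt_iff₀ (by positivity)]
    linarith
  have hnorm : ‖t • ∑ a ∈ G, b a‖ = t * ‖∑ a ∈ G, b a‖ := norm_smul_of_nonneg ht.le _
  obtain ⟨y, hy⟩ : ∃ y : Metric.sphere (0 : X) 1, (y : X) = t • ∑ a ∈ G, b a + b 1 := by
    have h1 : b.coord 1 (t • ∑ a ∈ G, b a) = 0 := by
      rw [map_smul, coord_sum_basis, if_neg hG, smul_zero]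
    have h := hb.norm_add_smul_basis_one h1 1
    rw [one_smul, hnorm, abs_one, max_eq_left (by linarith [hb.pos])] at h
    exact ⟨⟨_, mem_sphere_zero_iff_norm.2 h⟩, rfl⟩
  have hcoord : ∀ j, b.coord j y = (if j ∈ G then t else 0) + if j = 1 then 1 else 0 := fun j => by
    rw [hy, map_add, map_smul, coord_sum_basis, coord_basis, smul_eq_mul, mul_ite, mul_one,
      mul_zero]
  have hy1 : b.coord 1 y = 1 := by rw [hcoord, if_neg hG, if_pos rfl, zero_add]
  have hdist : ‖(y : X) - b 1‖ = t * ‖∑ a ∈ G, b a‖ := by rw [hy, add_sub_cancel_right, hnorm]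
  have hle : ‖t • ∑ a ∈ G.image π, b a‖ ≤ ‖(U y : X) - b.coord 1 (U y) • b 1‖ := by
    refine hb.norm_le_norm fun l => ?_
    rw [map_smul, coord_sum_basis, smul_eq_mul]
    split_ifs with hl
    · obtain ⟨j, hj, rfl⟩ := Finset.mem_image.1 hl
      have hj1 : j ≠ 1 := fun h => hG (h ▸ hj)
      have hπj : π j ≠ 1 := fun h => hj1 (hU.injective (h.trans hU.map_one.symm))
      have h := hU.coord_le_abs_coord_map hy1 (hdist.trans_lt htG) hj1
      rw [hcoord, if_pos hj, if_neg hj1, add_zero] at h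
      rwa [map_sub, map_smul, coord_basis, if_neg hπj, smul_zero, sub_zero, mul_one,
        abs_of_pos ht]
    · rw [mul_zero, abs_zero]
      positivity
  rw [norm_smul_of_nonneg ht.le, hU.norm_map_sub_coord_one_smul hy1, hdist] at hle
  exact le_of_mul_le_mul_left hle ht

lemma eq_id : π = id :=
  eq_id_of_tnorm_indVec_image_le hb.two_le_k hb.mul_eq_one hb.two_le_n hU.injective hU.map_one
    fun G hG => by
      simpa only [hb.hasTsirelsonNorm.norm_sum_basis] using hU.norm_sum_image_le hG

end ActsAsSignedPermutation

end IsTsirelsonBasis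

end Basis

theorem tsirelson_sphere_isometry_basis_Sn_general
    (θ : ℝ) (k : ℕ) (hk : 2 ≤ k) (hθk : θ⁻¹ = (k : ℝ)) (n : ℕ) (hn : 2 ≤ n)
    (X : Type*) [NormedAddCommGroup X] [NormedSpace ℝ X] (e : ℕ+ → X)
    (he : HasTsirelsonNorm θ (Schreier n) e)
    (hexp : ∀ x : X, ∃ a : ℕ+ → ℝ, HasSum (fun i => a i • e i) x)
    (U : Metric.sphere (0 : X) 1 → Metric.sphere (0 : X) 1)
    (hU : Isometry U) (hUsurj : Function.Surjective U) :
    ∃ ε : ℕ+ → ℝ,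
      (∀ i, ε i = 1 ∨ ε i = -1) ∧
      ∀ (i : ℕ+) (h : e i ∈ Metric.sphere (0 : X) 1),
        (U ⟨e i, h⟩ : X) = ε i • e i := by
  lift k to ℕ+ using by omega
  have hk' : (2 : ℝ) ≤ k := by exact_mod_cast hk
  have hθ : θ * k = 1 := by
    rw [inv_eq_iff_eq_inv.1 hθk, inv_mul_cancel₀ (by positivity)]
  have hθ1 : θ ≤ 1 := by nlinarith
  obtain ⟨b, rfl⟩ := he.exists_unconditionalSchauderBasis hθ1 hexp
  have hb : IsTsirelsonBasis θ k n b := ⟨by exact_mod_cast hk, hθ, hn, he⟩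
  obtain ⟨π, c, hπ⟩ :=
    hb.exists_actsAsSignedPermutation ⟨Equiv.ofBijective U ⟨hU.injective, hUsurj⟩, hU⟩
  obtain rfl := hπ.eq_id
  exact ⟨c, fun i => eq_or_eq_neg_of_abs_eq (hπ.abs_eq_one i), fun i _ => hπ.map_unit i⟩

/-- For integer `θ⁻¹ ≥ 2` and `n ≥ 2`, every surjective isometry of
the unit sphere of `T[θ, S_n]` maps `eᵢ` to `εᵢ eᵢ` for some signs `εᵢ ∈ {−1, 1}`. -/
theorem tsirelson_sphere_isometry_basis_Sn
    (θ : ℝ) (hθ0 : 0 < θ) (k : ℕ) (hk : 2 ≤ k) (hθk : θ⁻¹ = (k : ℝ))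
    (n : ℕ) (hn : 2 ≤ n)
    (X : Type*) [NormedAddCommGroup X] [NormedSpace ℝ X] (e : ℕ+ → X)
    (hX : IsTsirelsonSpace θ n X e)
    (U : Metric.sphere (0 : X) 1 → Metric.sphere (0 : X) 1)
    (hU : Isometry U) (hUsurj : Function.Surjective U) :
    ∃ ε : ℕ+ → ℝ,
      (∀ i, ε i = 1 ∨ ε i = -1) ∧
      ∀ (i : ℕ+) (h : e i ∈ Metric.sphere (0 : X) 1),
        (U ⟨e i, h⟩ : X) = ε i • e i :=
  tsirelson_sphere_isometry_basis_Sn_general θ k hk hθk n hn X e hX.norm_embed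
    (fun x => (hX.expansion x).exists) U hU hUsurj
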